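/- Let ℓ > 3 and p be primes with p ≡ 2 (mod 3) and p > 3ℓ². Then there are exactly ℓ+1 left O-ideals of reduced norm ℓ. If ℓ ≡ 2 (mod 3), none of them is principal and the relation 'I and J are in the same left ideal class' partitions them into exactly (ℓ+1)/3 classes, each containing exactly 3 of these ideals. If ℓ ≡ 1 (mod 3), exactly two of them are principal; these two principal ideals form one class, and the remaining ℓ−1 ideals partition into exactly (ℓ−1)/3 classes, each containing exactly 3 of these ideals. -/

import Mathlib

/-!
The order `O = O0 p` splits at `ℓ`: since `-p` has the form `a² + 3b²` modulo `ℓ`, explicit matrices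
for `i` and `j` give a surjection `φ : O → M₂(𝔽_ℓ)` with kernel `ℓO` under which the reduced norm
becomes the determinant (`exists_splitting`). An ideal of reduced norm `ℓ` contains `ℓ`, so it is
the preimage of a proper nonzero left ideal of `M₂(𝔽_ℓ)`, that is, of the annihilator of a line
`⟨v⟩ ⊆ 𝔽_ℓ²` (`Splitting.exists_line`, `Splitting.lineIdeal_mem_S3`). Hence these ideals correspond
to the `ℓ + 1` points of the projective line (`Splitting.S3_ncard`).

If `J = Iμ` for two such ideals, comparing the gcds of the norms gives `Nrd μ = 1`. Then
`ℓμ ∈ J ⊆ O` has norm `ℓ² < p/3`, and elements of `O` of norm less than `p/3` lie in `ℤ[ε]`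
(`small_norm`), so `ℓμ = A + Bε` (`exists_multiplier`). If the line `⟨v⟩` of `I` is not stable under
`ε`, the condition `I(A + Bε) ⊆ ℓO` forces `ℓ ∣ A, B`; so `μ` is one of the six units of `ℤ[ε]`,
and since `-1` acts trivially on lines, the class of `I` consists of the three distinct ideals of
the lines of `v, εv, ε²v` (`Splitting.class_ncard`).

In the same way a generator of a principal ideal of norm `ℓ` lies in `ℤ[ε]`, which makes its line
`ε`-stable; conversely, for an `ε`-stable line Thue's pigeonhole argument produces an element of
`ℤ[ε]` of norm `ℓ` annihilating it, and this element generates the ideal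
(`Splitting.isEig_of_principal`, `Splitting.principal_of_isEig`). The `ε`-stable lines are those
with `v₀² + 3v₁² = 0`: there are two of them when `-3` is a square modulo `ℓ`, i.e. when
`ℓ ≡ 1 (mod 3)`, and none when `ℓ ≡ 2 (mod 3)`. The number of classes follows by counting.
-/

open Quaternion

/-- The reduced norm of a quaternion: `Nrd x = x * star x` (a scalar). -/
noncomputable def Nrd {c₁ c₂ : ℚ} (x : ℍ[ℚ, c₁, c₂]) : ℚ := (x * star x).re

/-- `x ∈ ℚ` is divisible by the integer `n` within `ℤ`. -/
def IntDvd (n : ℤ) (x : ℚ) : Prop := ∃ z : ℤ, x = (n : ℚ) * (z : ℚ)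

/-- `I` is a left ideal of the (maximal order whose underlying set is) `Os`. -/
def IsLeftIdealOf {c₁ c₂ : ℚ} (Os : Set ℍ[ℚ, c₁, c₂]) (I : AddSubgroup ℍ[ℚ, c₁, c₂]) : Prop :=
  (I : Set ℍ[ℚ, c₁, c₂]) ⊆ Os ∧ ∀ x ∈ Os, ∀ y ∈ I, x * y ∈ I

/-- The left ideal `I` has reduced norm `ℓ` (gcd of reduced norms of elements is `ℓ`). -/
def HasReducedNorm {c₁ c₂ : ℚ} (I : AddSubgroup ℍ[ℚ, c₁, c₂]) (ℓ : ℤ) : Prop :=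
  (∀ α ∈ I, IntDvd ℓ (Nrd α)) ∧ ∀ d : ℤ, (∀ α ∈ I, IntDvd d (Nrd α)) → d ∣ ℓ

/-- The set `ℓO + I·r = {ℓ·x + y·r : x ∈ Os, y ∈ I}`. -/
def shiftSet {c₁ c₂ : ℚ} (ℓ : ℕ) (Os I : Set ℍ[ℚ, c₁, c₂]) (r : ℍ[ℚ, c₁, c₂]) :
    Set ℍ[ℚ, c₁, c₂] :=
  {z | ∃ x ∈ Os, ∃ y ∈ I, z = (ℓ : ℍ[ℚ, c₁, c₂]) * x + y * r}

/-- The quaternion algebra `ℍ[ℚ, −3, −p]`. -/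
abbrev H3 (p : ℕ) : Type := ℍ[ℚ, -3, -(p : ℚ)]

def qi3 (p : ℕ) : H3 p := ⟨0, 1, 0, 0⟩
def qj3 (p : ℕ) : H3 p := ⟨0, 0, 1, 0⟩
def qk3 (p : ℕ) : H3 p := ⟨0, 0, 0, 1⟩

/-- `ε = (1+i)/2`. -/
def eps (p : ℕ) : H3 p := ⟨1/2, 1/2, 0, 0⟩

/-- `ε̄ = (1−i)/2`. -/
def epsBar (p : ℕ) : H3 p := ⟨1/2, -(1/2), 0, 0⟩

/-- The maximal order `O = ℤ·1 + ℤ·ε + ℤ·(i+k)/3 + ℤ·(j+k)/2` of `ℍ[ℚ,−3,−p]`,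
the endomorphism ring of `y² = x³ + 1` over `𝔽_{p²}` (as a set). -/
def O0 (p : ℕ) : Set (H3 p) :=
  {z | ∃ A B C D : ℤ, z = (A : H3 p) + B • eps p +
    C • (⟨0, 1/3, 0, 1/3⟩ : H3 p) + D • (⟨0, 0, 1/2, 1/2⟩ : H3 p)}

/-- Two left ideals are in the same left ideal class: `J = I·μ` for some `μ ≠ 0`. -/
def SameClass {c₁ c₂ : ℚ} (I J : AddSubgroup ℍ[ℚ, c₁, c₂]) : Prop :=
  ∃ μ : ℍ[ℚ, c₁, c₂], μ ≠ 0 ∧ (J : Set ℍ[ℚ, c₁, c₂]) = (· * μ) '' (I : Set ℍ[ℚ, c₁, c₂])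

/-- `I` is a principal left ideal of the order with underlying set `Os`: `I = O·α`. -/
def IsPrincipalIdeal {c₁ c₂ : ℚ} (Os : Set ℍ[ℚ, c₁, c₂]) (I : AddSubgroup ℍ[ℚ, c₁, c₂]) :
    Prop :=
  ∃ α ∈ Os, (I : Set ℍ[ℚ, c₁, c₂]) = (· * α) '' Os

/-- The set of left `O`-ideals of reduced norm `ℓ` for `O = End(E₀)`. -/
def S3 (p ℓ : ℕ) : Set (AddSubgroup (H3 p)) :=
  {I | IsLeftIdealOf (O0 p) I ∧ HasReducedNorm I (ℓ : ℤ)}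

/-! ### Arithmetic of the order -/

/-- The element of `O0 p` with integer coordinates `A, B, C, D` in the basis
`1, ε, (i+k)/3, (j+k)/2`, written in the basis `1, i, j, k`. -/
def ordElt (p : ℕ) (A B C D : ℤ) : H3 p :=
  ⟨A + B / 2, B / 2 + C / 3, D / 2, C / 3 + D / 2⟩

lemma mem_O0_iff {p : ℕ} {z : H3 p} : z ∈ O0 p ↔ ∃ A B C D : ℤ, z = ordElt p A B C D := by
  have key : ∀ A B C D : ℤ, (A : H3 p) + B • eps p + C • (⟨0, 1/3, 0, 1/3⟩ : H3 p) +
      D • (⟨0, 0, 1/2, 1/2⟩ : H3 p) = ordElt p A B C D := by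
    intro A B C D
    ext <;> simp [eps, ordElt] <;> ring
  simp only [O0, Set.mem_ofPred_eq, key]

lemma ordElt_mem (p : ℕ) (A B C D : ℤ) : ordElt p A B C D ∈ O0 p :=
  mem_O0_iff.2 ⟨A, B, C, D, rfl⟩

lemma ordElt_add (p : ℕ) (A B C D A' B' C' D' : ℤ) :
    ordElt p A B C D + ordElt p A' B' C' D' = ordElt p (A + A') (B + B') (C + C') (D + D') := by
  ext <;> simp [ordElt] <;> ring

lemma ordElt_neg (p : ℕ) (A B C D : ℤ) :
    -ordElt p A B C D = ordElt p (-A) (-B) (-C) (-D) := by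
  ext <;> simp [ordElt] <;> ring

lemma ordElt_int (p : ℕ) (A : ℤ) : ordElt p A 0 0 0 = (A : H3 p) := by
  ext <;> simp [ordElt]

lemma ordElt_star (p : ℕ) (A B C D : ℤ) :
    star (ordElt p A B C D) = ordElt p (A + B) (-B) (-C) (-D) := by
  ext <;> simp [ordElt] <;> ring

/-- The multiplication table of `O0 p`; the coordinates stay integral because `p + 1 = 3 * q`. -/
lemma ordElt_mul {p : ℕ} {q : ℤ} (hq : (p : ℤ) + 1 = 3 * q) (A B C D A' B' C' D' : ℤ) :
    ordElt p A B C D * ordElt p A' B' C' D' = ordElt p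
      (A*A' - B*B' + B*D' - C*B' - q*C*C' + (1-q)*C*D' - D*B' - 2*q*D*C' + (1-3*q)*D*D')
      (A*B' + B*A' + B*B' - B*C' - 2*B*D' + C*B' - (1+q)*C*D' + 2*D*B' + (1+q)*D*C')
      (A*C' + 2*B*C' + 3*B*D' + C*A' - C*B' + 2*C*D' - 3*D*B' - 2*D*C')
      (A*D' - B*C' - B*D' + C*B' - C*D' + D*A' + 2*D*B' + D*C') := by
  have hp : (p : ℚ) = 3 * q - 1 := by
    have : ((p : ℤ) : ℚ) + 1 = 3 * q := by exact_mod_cast hq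
    push_cast at this; linarith
  ext <;> simp [ordElt, hp] <;> ring

lemma Nrd_eq {p : ℕ} (x : H3 p) :
    Nrd x = x.re ^ 2 + 3 * x.imI ^ 2 + p * x.imJ ^ 2 + 3 * p * x.imK ^ 2 := by
  simp [Nrd]; ring

lemma Nrd_ordElt {p : ℕ} {q : ℤ} (hq : (p : ℤ) + 1 = 3 * q) (A B C D : ℤ) :
    Nrd (ordElt p A B C D) =
      ((A^2 + A*B + B^2 + B*C + q*C^2 + (3*q-1)*C*D + (3*q-1)*D^2 : ℤ) : ℚ) := by
  have hp : (p : ℚ) = 3 * q - 1 := by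
    have : ((p : ℤ) : ℚ) + 1 = 3 * q := by exact_mod_cast hq
    push_cast at this; linarith
  rw [Nrd_eq]; simp [ordElt, hp]; ring

lemma Nrd_mul {p : ℕ} (x y : H3 p) : Nrd (x * y) = Nrd x * Nrd y := by
  simp only [Nrd_eq]; simp; ring

lemma Nrd_nonneg {p : ℕ} (x : H3 p) : 0 ≤ Nrd x := by
  rw [Nrd_eq]; positivity

lemma Nrd_intCast {p : ℕ} (n : ℤ) : Nrd (n : H3 p) = (n : ℚ) ^ 2 := by
  rw [Nrd_eq]; simp

lemma star_mul_self_Nrd {p : ℕ} (x : H3 p) : star x * x = ((Nrd x : ℚ) : H3 p) := by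
  have h := Nrd_eq x
  generalize Nrd x = n at h ⊢
  ext <;> simp <;> first | ring1 | (rw [h]; ring1)

lemma mul_star_self_Nrd {p : ℕ} (x : H3 p) : x * star x = ((Nrd x : ℚ) : H3 p) := by
  have h := Nrd_eq x
  generalize Nrd x = n at h ⊢
  ext <;> simp <;> first | ring1 | (rw [h]; ring1)

lemma Nrd_ne_zero {p : ℕ} (hp : 0 < p) {x : H3 p} (hx : x ≠ 0) : Nrd x ≠ 0 := by
  intro h
  apply hx
  rw [Nrd_eq] at h
  have hp' : (0 : ℚ) < p := by exact_mod_cast hp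
  have h1 := sq_nonneg x.re
  have h2 := sq_nonneg x.imI
  have h3 := mul_nonneg hp'.le (sq_nonneg x.imJ)
  have h4 := mul_nonneg hp'.le (sq_nonneg x.imK)
  have e1 : x.re = 0 := pow_eq_zero_iff two_ne_zero |>.1 (by linarith)
  have e2 : x.imI = 0 := pow_eq_zero_iff two_ne_zero |>.1 (by linarith)
  have e3 : (p : ℚ) * x.imJ ^ 2 = 0 := by linarith
  have e4 : (p : ℚ) * x.imK ^ 2 = 0 := by linarith
  ext
  · simpa using e1
  · simpa using e2
  · simpa [hp'.ne'] using e3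
  · simpa [hp'.ne'] using e4

lemma exists_inv {p : ℕ} (hp : 0 < p) {x : H3 p} (hx : x ≠ 0) :
    ∃ y : H3 p, y ≠ 0 ∧ x * y = 1 ∧ y * x = 1 := by
  have hn := Nrd_ne_zero hp hx
  have h1 : x * ((Nrd x)⁻¹ • star x) = 1 := by
    rw [mul_smul_comm, mul_star_self_Nrd]
    ext <;> simp [hn]
  have h2 : ((Nrd x)⁻¹ • star x) * x = 1 := by
    rw [smul_mul_assoc, star_mul_self_Nrd]
    ext <;> simp [hn]
  refine ⟨_, ?_, h1, h2⟩
  intro h0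
  rw [h0, zero_mul] at h2
  have := congrArg QuaternionAlgebra.re h2
  simp at this

lemma add_mem_O0 {p : ℕ} {x y : H3 p} (hx : x ∈ O0 p) (hy : y ∈ O0 p) : x + y ∈ O0 p := by
  obtain ⟨A, B, C, D, rfl⟩ := mem_O0_iff.1 hx
  obtain ⟨A', B', C', D', rfl⟩ := mem_O0_iff.1 hy
  rw [ordElt_add]; exact ordElt_mem ..

lemma neg_mem_O0 {p : ℕ} {x : H3 p} (hx : x ∈ O0 p) : -x ∈ O0 p := by
  obtain ⟨A, B, C, D, rfl⟩ := mem_O0_iff.1 hx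
  rw [ordElt_neg]; exact ordElt_mem ..

lemma int_mem_O0 {p : ℕ} (n : ℤ) : (n : H3 p) ∈ O0 p := by
  rw [← ordElt_int]; exact ordElt_mem ..

lemma nat_mem_O0 {p : ℕ} (n : ℕ) : (n : H3 p) ∈ O0 p := by
  exact_mod_cast int_mem_O0 (p := p) (n : ℤ)

lemma one_mem_O0 {p : ℕ} : (1 : H3 p) ∈ O0 p := by
  exact_mod_cast int_mem_O0 (p := p) 1

lemma star_mem_O0 {p : ℕ} {x : H3 p} (hx : x ∈ O0 p) : star x ∈ O0 p := by
  obtain ⟨A, B, C, D, rfl⟩ := mem_O0_iff.1 hx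
  rw [ordElt_star]; exact ordElt_mem ..

lemma exists_q {p : ℕ} (hp3 : p % 3 = 2) : ∃ q : ℤ, (p : ℤ) + 1 = 3 * q :=
  ⟨((p : ℤ) + 1) / 3, by omega⟩

lemma mul_mem_O0 {p : ℕ} (hp3 : p % 3 = 2) {x y : H3 p} (hx : x ∈ O0 p) (hy : y ∈ O0 p) :
    x * y ∈ O0 p := by
  obtain ⟨q, hq⟩ := exists_q hp3
  obtain ⟨A, B, C, D, rfl⟩ := mem_O0_iff.1 hx
  obtain ⟨A', B', C', D', rfl⟩ := mem_O0_iff.1 hy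
  rw [ordElt_mul hq]; exact ordElt_mem ..

lemma Nrd_int {p : ℕ} (hp3 : p % 3 = 2) {x : H3 p} (hx : x ∈ O0 p) : ∃ n : ℤ, Nrd x = n := by
  obtain ⟨q, hq⟩ := exists_q hp3
  obtain ⟨A, B, C, D, rfl⟩ := mem_O0_iff.1 hx
  exact ⟨_, Nrd_ordElt hq ..⟩

/-- Elements of `O0 p` of norm below `p / 3` lie in `ℤ[ε]`: outside `ℤ[ε]` the `j, k`-part
contributes `p * (C² + 3CD + 3D²) / 3 ≥ p / 3` to the norm. -/
lemma small_norm {p : ℕ} {x : H3 p} (hx : x ∈ O0 p) (hs : 3 * Nrd x < p) :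
    ∃ A B : ℤ, x = ordElt p A B 0 0 := by
  obtain ⟨A, B, C, D, rfl⟩ := mem_O0_iff.1 hx
  have h0 : (p : ℚ) * ((C^2 + 3*C*D + 3*D^2 : ℤ) : ℚ) ≤ 3 * Nrd (ordElt p A B C D) := by
    rw [Nrd_eq]; simp only [ordElt]; push_cast
    nlinarith [sq_nonneg ((A:ℚ) + B / 2), sq_nonneg ((B:ℚ) / 2 + C / 3)]
  have h1 : C^2 + 3*C*D + 3*D^2 < 1 := by
    by_contra! h
    have h' : (1 : ℚ) ≤ ((C^2 + 3*C*D + 3*D^2 : ℤ) : ℚ) := by exact_mod_cast h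
    have := mul_le_mul_of_nonneg_left h' (Nat.cast_nonneg (α := ℚ) p)
    linarith
  have hD : D = 0 := by
    by_contra hD
    have : 0 < D ^ 2 := by positivity
    nlinarith [sq_nonneg (2 * C + 3 * D)]
  subst hD
  have hC : C = 0 := by
    by_contra hC
    have : 0 < C ^ 2 := by positivity
    nlinarith
  subst hC
  exact ⟨A, B, rfl⟩

/-! ### Splitting of the order modulo `ℓ` -/

/-- A splitting of `O0 p` modulo `ℓ`: a surjective ring homomorphism `O0 p → M₂(𝔽_ℓ)` with
kernel `ℓ • O0 p` carrying the reduced norm to the determinant and the reduced trace to the trace.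
It is encoded as a function on the whole algebra whose values outside `O0 p` are irrelevant,
and it is normalised by the image of `ε`. -/
structure Splitting (p ℓ : ℕ) [Fact ℓ.Prime] where
  /-- The reduction map. -/
  φ : H3 p → Matrix (Fin 2) (Fin 2) (ZMod ℓ)
  map_add : ∀ x ∈ O0 p, ∀ y ∈ O0 p, φ (x + y) = φ x + φ y
  map_mul : ∀ x ∈ O0 p, ∀ y ∈ O0 p, φ (x * y) = φ x * φ y
  det : ∀ x ∈ O0 p, ∃ n : ℤ, Nrd x = n ∧ (φ x).det = n
  trace : ∀ x ∈ O0 p, ∃ n : ℤ, 2 * x.re = n ∧ (φ x).trace = n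
  ker : ∀ x ∈ O0 p, φ x = 0 → ∃ y ∈ O0 p, x = (ℓ : H3 p) * y
  surj : ∀ M, ∃ x ∈ O0 p, φ x = M
  map_zeps : ∀ A B : ℤ, φ (ordElt p A B 0 0) =
    !![(A : ZMod ℓ) + B / 2, -3 * (B / 2); B / 2, A + B / 2]

/-- The matrix of `t + u i + v j + w k` when `i ↦ !![0, -3; 1, 0]` and `j ↦ !![a, 3b; b, -a]`;
the latter squares to `a² + 3b²`. -/
def splitMat {K : Type*} [Field K] (a b t u v w : K) : Matrix (Fin 2) (Fin 2) K :=
  !![t + v*a - 3*b*w, -3*u + 3*b*v + 3*a*w; u + b*v + a*w, t - a*v + 3*b*w]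

lemma splitMat_mul {K : Type*} [Field K] (a b P t u v w t' u' v' w' : K)
    (h : P = -(a^2 + 3*b^2)) :
    splitMat a b t u v w * splitMat a b t' u' v' w' = splitMat a b
      (t*t' - 3*u*u' - P*v*v' - 3*P*w*w') (t*u' + u*t' + P*v*w' - P*w*v')
      (t*v' + v*t' - 3*u*w' + 3*w*u') (t*w' + w*t' + u*v' - v*u') := by
  subst h
  ext i j
  fin_cases i <;> fin_cases j <;> simp [splitMat, Matrix.mul_apply] <;> ring

lemma splitMat_inj {K : Type*} [Field K] {a b t u v w : K} (h2 : (2 : K) ≠ 0) (h3 : (3 : K) ≠ 0)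
    (hab : a^2 + 3*b^2 ≠ 0) (h : splitMat a b t u v w = 0) : t = 0 ∧ u = 0 ∧ v = 0 ∧ w = 0 := by
  have e00 : t + v*a - 3*b*w = 0 := by simpa [splitMat] using congrFun (congrFun h 0) 0
  have e01 : -3*u + 3*b*v + 3*a*w = 0 := by simpa [splitMat] using congrFun (congrFun h 0) 1
  have e10 : u + b*v + a*w = 0 := by simpa [splitMat] using congrFun (congrFun h 1) 0
  have e11 : t - a*v + 3*b*w = 0 := by simpa [splitMat] using congrFun (congrFun h 1) 1
  have ht : t = 0 := by
    have : 2 * t = 0 := by linear_combination e00 + e11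
    simpa [h2] using this
  have hu : u = 0 := by
    have : 2 * 3 * u = 0 := by linear_combination 3 * e10 - e01
    simpa [h2, h3] using this
  subst ht hu
  have hv : v = 0 := by
    have : (a^2 + 3*b^2) * v = 0 := by linear_combination a * e00 + 3 * b * e10
    exact (mul_eq_zero.1 this).resolve_left hab
  have hw : w = 0 := by
    have : (a^2 + 3*b^2) * w = 0 := by linear_combination -b * e00 + a * e10
    exact (mul_eq_zero.1 this).resolve_left hab
  exact ⟨rfl, rfl, hv, hw⟩

lemma splitMat_surj {K : Type*} [Field K] {a b : K} (h2 : (2 : K) ≠ 0) (h3 : (3 : K) ≠ 0)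
    (hab : a^2 + 3*b^2 ≠ 0) (M : Matrix (Fin 2) (Fin 2) K) :
    ∃ t u v w, splitMat a b t u v w = M := by
  obtain ⟨X, hX⟩ : ∃ X, X = (M 0 0 - M 1 1) / 2 := ⟨_, rfl⟩
  obtain ⟨Y, hY⟩ : ∃ Y, Y = (M 0 1 + 3 * M 1 0) / 6 := ⟨_, rfl⟩
  have h6 : (6 : K) ≠ 0 := by
    have : (6 : K) = 2 * 3 := by norm_num
    rw [this]; exact mul_ne_zero h2 h3
  have e1 : (M 0 0 - M 1 1) = 2 * X := by rw [hX]; field_simp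
  have e2 : (M 0 1 + 3 * M 1 0) = 6 * Y := by rw [hY]; field_simp
  have f1 : (a * X + 3 * b * Y) / (a^2 + 3*b^2) * a -
      3 * b * ((a * Y - b * X) / (a^2 + 3*b^2)) = X := by
    field_simp; ring
  have f2 : b * ((a * X + 3 * b * Y) / (a^2 + 3*b^2)) +
      a * ((a * Y - b * X) / (a^2 + 3*b^2)) = Y := by
    rw [← mul_div_assoc, ← mul_div_assoc, ← add_div, div_eq_iff hab]; ring
  refine ⟨(M 0 0 + M 1 1) / 2, (3 * M 1 0 - M 0 1) / 6, (a * X + 3 * b * Y) / (a^2 + 3*b^2),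
    (a * Y - b * X) / (a^2 + 3*b^2), ?_⟩
  generalize (a * X + 3 * b * Y) / (a^2 + 3*b^2) = v at *
  generalize (a * Y - b * X) / (a^2 + 3*b^2) = w at *
  ext i j
  fin_cases i <;> fin_cases j <;> simp [splitMat]
  · field_simp; linear_combination 2 * f1 - e1
  · field_simp; linear_combination 18 * f2 - 3 * e2
  · field_simp; linear_combination 6 * f2 - e2
  · field_simp; linear_combination -2 * f1 + e1

lemma exists_sq_add_three_sq {ℓ : ℕ} [Fact ℓ.Prime] (hℓ : 3 < ℓ) (c : ZMod ℓ) :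
    ∃ a b : ZMod ℓ, a ^ 2 + 3 * b ^ 2 = c := by
  have h3 : (3 : ZMod ℓ) ≠ 0 := by
    intro h
    have : ((3 : ℕ) : ZMod ℓ) = 0 := by exact_mod_cast h
    rw [ZMod.natCast_eq_zero_iff] at this
    exact absurd (Nat.le_of_dvd (by norm_num) this) (by omega)
  open Polynomial in
  obtain ⟨a, b, hab⟩ := FiniteField.exists_root_sum_quadratic (R := ZMod ℓ)
    (f := X ^ 2 - C c) (g := C 3 * X ^ 2)
    (degree_X_pow_sub_C (by decide) _) (degree_C_mul_X_pow 2 h3)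
    (by
      rw [← Nat.card_eq_fintype_card, Nat.card_zmod]
      exact ((Fact.out : ℓ.Prime).eq_two_or_odd).resolve_left (by omega))
  refine ⟨a, b, ?_⟩
  simp at hab
  linear_combination hab

lemma natCast_ne_zero_zmod {ℓ n : ℕ} (h0 : 0 < n) (h : n < ℓ) : (n : ZMod ℓ) ≠ 0 := by
  rw [Ne, ZMod.natCast_eq_zero_iff]
  exact fun hd => absurd (Nat.le_of_dvd h0 hd) (by omega)

lemma two_ne_zmod {ℓ : ℕ} (hℓ : 3 < ℓ) : (2 : ZMod ℓ) ≠ 0 := by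
  exact_mod_cast natCast_ne_zero_zmod (n := 2) (ℓ := ℓ) (by norm_num) (by omega)

lemma three_ne_zmod {ℓ : ℕ} (hℓ : 3 < ℓ) : (3 : ZMod ℓ) ≠ 0 := by
  exact_mod_cast natCast_ne_zero_zmod (n := 3) (ℓ := ℓ) (by norm_num) (by omega)

/-- The reduction of an element of `O0 p`, read off from its integer coordinates (the floors are
exact on `O0 p`). -/
noncomputable def splitMap {p ℓ : ℕ} [Fact ℓ.Prime] (a b : ZMod ℓ) (x : H3 p) :
    Matrix (Fin 2) (Fin 2) (ZMod ℓ) :=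
  let A : ZMod ℓ := ⌊x.re - x.imI + x.imK - x.imJ⌋
  let B : ZMod ℓ := ⌊2 * x.imI - 2 * x.imK + 2 * x.imJ⌋
  let C : ZMod ℓ := ⌊3 * x.imK - 3 * x.imJ⌋
  let D : ZMod ℓ := ⌊2 * x.imJ⌋
  splitMat a b (A + B / 2) (B / 2 + C / 3) (D / 2) (C / 3 + D / 2)

lemma splitMap_ordElt {p ℓ : ℕ} [Fact ℓ.Prime] (a b : ZMod ℓ) (A B C D : ℤ) :
    splitMap a b (ordElt p A B C D) = splitMat a b ((A : ZMod ℓ) + B / 2) (B / 2 + C / 3) (D / 2)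
      (C / 3 + D / 2) := by
  have h1 : ((A : ℚ) + B / 2) - (B / 2 + C / 3) + (C / 3 + D / 2) - D / 2 = (A : ℤ) := by ring
  have h2 : 2 * ((B : ℚ) / 2 + C / 3) - 2 * (C / 3 + D / 2) + 2 * (D / 2) = (B : ℤ) := by ring
  have h3 : 3 * ((C : ℚ) / 3 + D / 2) - 3 * (D / 2) = (C : ℤ) := by ring
  have h4 : 2 * ((D : ℚ) / 2) = (D : ℤ) := by ring
  simp only [splitMap, ordElt, h1, h2, h3, Int.floor_intCast]
  simp only [h4, Int.floor_intCast]

theorem exists_splitting {p ℓ : ℕ} [Fact ℓ.Prime] (hℓ : 3 < ℓ) (hp : p.Prime) (hp3 : p % 3 = 2)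
    (hpl : 3 * ℓ ^ 2 < p) : Nonempty (Splitting p ℓ) := by
  obtain ⟨q, hq⟩ := exists_q hp3
  have h2 := two_ne_zmod hℓ
  have h3 := three_ne_zmod hℓ
  obtain ⟨a, b, hab⟩ := exists_sq_add_three_sq hℓ (-(p : ZMod ℓ))
  have hP : (p : ZMod ℓ) = 3 * q - 1 := by
    have := congrArg (Int.cast : ℤ → ZMod ℓ) hq
    push_cast at this
    linear_combination this
  have hab0 : a^2 + 3*b^2 ≠ 0 := by
    rw [hab, neg_ne_zero, Ne, ZMod.natCast_eq_zero_iff, Nat.prime_dvd_prime_iff_eq Fact.out hp]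
    rintro rfl
    nlinarith
  have hPab : (3 * q - 1 : ZMod ℓ) = -(a^2 + 3*b^2) := by rw [hab, ← hP]; ring
  refine ⟨⟨splitMap a b, ?_, ?_, ?_, ?_, ?_, ?_, ?_⟩⟩
  · intro x hx y hy
    obtain ⟨A, B, C, D, rfl⟩ := mem_O0_iff.1 hx
    obtain ⟨A', B', C', D', rfl⟩ := mem_O0_iff.1 hy
    rw [ordElt_add]
    simp only [splitMap_ordElt]
    ext i j
    fin_cases i <;> fin_cases j <;> simp [splitMat] <;> ring
  · intro x hx y hy
    obtain ⟨A, B, C, D, rfl⟩ := mem_O0_iff.1 hx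
    obtain ⟨A', B', C', D', rfl⟩ := mem_O0_iff.1 hy
    rw [ordElt_mul hq]
    simp only [splitMap_ordElt]
    rw [splitMat_mul _ _ (3 * q - 1 : ZMod ℓ) _ _ _ _ _ _ _ _ hPab]
    congr 1 <;> push_cast <;> field_simp <;> ring
  · intro x hx
    obtain ⟨A, B, C, D, rfl⟩ := mem_O0_iff.1 hx
    refine ⟨_, Nrd_ordElt hq .., ?_⟩
    rw [splitMap_ordElt, splitMat, Matrix.det_fin_two_of]
    push_cast
    rw [hPab]
    have hq' : (q : ZMod ℓ) = (1 - (a^2 + 3*b^2)) / 3 := by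
      rw [eq_div_iff h3]; linear_combination hPab
    rw [hq']
    field_simp
    ring
  · intro x hx
    obtain ⟨A, B, C, D, rfl⟩ := mem_O0_iff.1 hx
    refine ⟨2 * A + B, by simp [ordElt]; ring, ?_⟩
    rw [splitMap_ordElt, splitMat, Matrix.trace_fin_two_of]
    push_cast
    field_simp
    ring
  · intro x hx h
    obtain ⟨A, B, C, D, rfl⟩ := mem_O0_iff.1 hx
    rw [splitMap_ordElt] at h
    obtain ⟨e1, e2, e3, e4⟩ := splitMat_inj h2 h3 hab0 h
    have hD : (D : ZMod ℓ) = 0 := by simpa [h2] using e3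
    have hC : (C : ZMod ℓ) = 0 := by simpa [hD, h3] using e4
    have hB : (B : ZMod ℓ) = 0 := by simpa [hC, h2] using e2
    have hA : (A : ZMod ℓ) = 0 := by simpa [hB] using e1
    rw [ZMod.intCast_zmod_eq_zero_iff_dvd] at hA hB hC hD
    obtain ⟨A, rfl⟩ := hA
    obtain ⟨B, rfl⟩ := hB
    obtain ⟨C, rfl⟩ := hC
    obtain ⟨D, rfl⟩ := hD
    refine ⟨_, ordElt_mem p A B C D, ?_⟩
    ext <;> simp [ordElt] <;> ring
  · intro M
    obtain ⟨t, u, v, w, rfl⟩ := splitMat_surj h2 h3 hab0 M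
    obtain ⟨t, rfl⟩ := ZMod.intCast_surjective t
    obtain ⟨u, rfl⟩ := ZMod.intCast_surjective u
    obtain ⟨v, rfl⟩ := ZMod.intCast_surjective v
    obtain ⟨w, rfl⟩ := ZMod.intCast_surjective w
    -- the coordinates of `t + u i + v j + w k`
    refine ⟨_, ordElt_mem p (t - u + w - v) (2*u - 2*w + 2*v) (3*w - 3*v) (2*v), ?_⟩
    rw [splitMap_ordElt]
    congr 1 <;> push_cast <;> field_simp <;> ring
  · intro A B
    rw [splitMap_ordElt]
    simp [splitMat]

/-! ### Left ideals of `M₂(K)` -/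

lemma exists_smul_of_cross {K : Type*} [Field K] {r s : Fin 2 → K} (hr : r ≠ 0)
    (h : r 0 * s 1 = r 1 * s 0) : ∃ c : K, s = c • r := by
  by_cases h0 : r 0 = 0
  · have h1 : r 1 ≠ 0 := by
      intro h1
      exact hr (by ext i; fin_cases i <;> simp [h0, h1])
    have hs : s 0 = 0 := by simpa [h0, h1] using h.symm
    refine ⟨s 1 / r 1, ?_⟩
    ext i; fin_cases i <;> simp [h0, h1, hs]
  · refine ⟨s 0 / r 0, ?_⟩
    ext i; fin_cases i
    · simp [h0]
    · simp only [Fin.mk_one, Pi.smul_apply, smul_eq_mul]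
      field_simp
      linear_combination h

lemma cross_of_perp {K : Type*} [Field K] {r s v : Fin 2 → K} (hv : v ≠ 0)
    (hr : r 0 * v 0 + r 1 * v 1 = 0) (hs : s 0 * v 0 + s 1 * v 1 = 0) :
    r 0 * s 1 = r 1 * s 0 := by
  by_contra hne
  have hd : r 0 * s 1 - r 1 * s 0 ≠ 0 := sub_ne_zero.2 hne
  have h0 : (r 0 * s 1 - r 1 * s 0) * v 0 = 0 := by linear_combination s 1 * hr - r 1 * hs
  have h1 : (r 0 * s 1 - r 1 * s 0) * v 1 = 0 := by linear_combination r 0 * hs - s 0 * hr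
  apply hv
  ext i; fin_cases i
  · simpa [hd] using h0
  · simpa [hd] using h1

lemma mulVec_two {K : Type*} [Field K] (M : Matrix (Fin 2) (Fin 2) K) (v : Fin 2 → K) (i : Fin 2) :
    (M.mulVec v) i = M i 0 * v 0 + M i 1 * v 1 := by
  simp [Matrix.mulVec, dotProduct, Fin.sum_univ_two]

/-- The annihilator of a line in `M₂(K)` is generated, as a left ideal, by any nonzero element. -/
lemma exists_left_factor {K : Type*} [Field K] {M N : Matrix (Fin 2) (Fin 2) K} {v : Fin 2 → K}
    (hv : v ≠ 0) (hM : M ≠ 0) (hMv : M.mulVec v = 0) (hNv : N.mulVec v = 0) :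
    ∃ Y, N = Y * M := by
  obtain ⟨i, hi⟩ : ∃ i, M i ≠ 0 := by
    by_contra! h
    exact hM (by ext i j; simp [h i])
  have hM' : M i 0 * v 0 + M i 1 * v 1 = 0 := by rw [← mulVec_two, hMv]; rfl
  have hN' : ∀ j, N j 0 * v 0 + N j 1 * v 1 = 0 := fun j => by rw [← mulVec_two, hNv]; rfl
  choose c hc using fun j => exists_smul_of_cross hi (cross_of_perp hv hM' (hN' j))
  refine ⟨Matrix.of fun j k => if k = i then c j else 0, ?_⟩
  ext j l
  rw [Matrix.mul_apply]
  simp [hc j]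

/-- A left ideal of `M₂(K)` not annihilating a line and meeting the annihilator of that line
nontrivially contains an invertible matrix. -/
lemma exists_det_ne_zero {K : Type*} [Field K] {M N : Matrix (Fin 2) (Fin 2) K} {v : Fin 2 → K}
    (hM : M ≠ 0) (hMv : M.mulVec v = 0) (hNv : N.mulVec v ≠ 0) :
    ∃ X Y : Matrix (Fin 2) (Fin 2) K, (X * M + Y * N).det ≠ 0 := by
  obtain ⟨i, hi⟩ : ∃ i, M i ≠ 0 := by
    by_contra! h
    exact hM (by ext i j; simp [h i])
  obtain ⟨j, hj⟩ : ∃ j, N.mulVec v j ≠ 0 := by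
    by_contra! h
    exact hNv (by ext i; simp [h i])
  have hMi : M i 0 * v 0 + M i 1 * v 1 = 0 := by rw [← mulVec_two, hMv]; rfl
  rw [mulVec_two] at hj
  refine ⟨Matrix.of fun a k => if a = 0 ∧ k = i then 1 else 0,
    Matrix.of fun a k => if a = 1 ∧ k = j then 1 else 0, ?_⟩
  intro hdet
  rw [Matrix.det_fin_two] at hdet
  simp [Matrix.mul_apply] at hdet
  obtain ⟨c, hc⟩ := exists_smul_of_cross (s := N j) hi (by linear_combination hdet)
  apply hj
  simp only [hc, Pi.smul_apply, smul_eq_mul]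
  linear_combination c * hMi

/-- The gcd condition in `HasReducedNorm` as a membership principle: a subgroup of `ℤ` containing
all norms of elements of `I` contains the reduced norm of `I`. -/
lemma HasReducedNorm.mem {c₁ c₂ : ℚ} {I : AddSubgroup ℍ[ℚ, c₁, c₂]} {n : ℤ}
    (h : HasReducedNorm I n) (G : AddSubgroup ℤ) (hG : ∀ α ∈ I, ∃ z ∈ G, Nrd α = (z : ℚ)) :
    n ∈ G := by
  obtain ⟨d, rfl⟩ := Int.subgroup_cyclic G
  rw [AddSubgroup.mem_closure_singleton]
  obtain ⟨k, hk⟩ := h.2 d (fun α hα => by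
    obtain ⟨z, hz, hα⟩ := hG α hα
    obtain ⟨k, rfl⟩ := AddSubgroup.mem_closure_singleton.1 hz
    exact ⟨k, by rw [hα]; push_cast [zsmul_eq_mul]; ring⟩)
  exact ⟨k, by rw [hk, smul_eq_mul, mul_comm]⟩

/-! ### Ideals of norm `ℓ` and lines in `𝔽_ℓ²` -/

lemma ell_mem_of_S3 {p ℓ : ℕ} (hp3 : p % 3 = 2) {I : AddSubgroup (H3 p)} (hI : I ∈ S3 p ℓ) :
    (ℓ : H3 p) ∈ I := by
  -- the integers in `I` form a subgroup of `ℤ` containing every norm `star α * α`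
  have := hI.2.mem (I.comap (Int.castAddHom (H3 p))) (fun α hα => by
    obtain ⟨n, hn⟩ := Nrd_int hp3 (hI.1.1 hα)
    refine ⟨n, ?_, hn⟩
    have h := hI.1.2 _ (star_mem_O0 (hI.1.1 hα)) α hα
    rw [star_mul_self_Nrd, hn, QuaternionAlgebra.coe_intCast] at h
    simpa using h)
  simpa using this

namespace Splitting

variable {p ℓ : ℕ} [Fact ℓ.Prime] (s : Splitting p ℓ)

lemma map_int (n : ℤ) : s.φ (n : H3 p) = !![(n : ZMod ℓ), 0; 0, n] := by
  rw [← ordElt_int, s.map_zeps]; simp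

lemma map_zero : s.φ 0 = 0 := by
  have := s.map_int 0
  rw [Int.cast_zero] at this
  rw [this]; ext i j; fin_cases i <;> fin_cases j <;> simp

lemma map_neg {x : H3 p} (hx : x ∈ O0 p) : s.φ (-x) = -s.φ x := by
  have := s.map_add x hx (-x) (neg_mem_O0 hx)
  rw [add_neg_cancel, s.map_zero] at this
  exact (neg_eq_of_add_eq_zero_right this.symm).symm

lemma map_sub {x y : H3 p} (hx : x ∈ O0 p) (hy : y ∈ O0 p) : s.φ (x - y) = s.φ x - s.φ y := by
  rw [sub_eq_add_neg, s.map_add x hx _ (neg_mem_O0 hy), s.map_neg hy, sub_eq_add_neg]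

lemma map_ell : s.φ (ℓ : H3 p) = 0 := by
  have := s.map_int ℓ
  rw [Int.cast_natCast] at this
  rw [this]; ext i j; fin_cases i <;> fin_cases j <;> simp

lemma map_ell_mul {y : H3 p} (hy : y ∈ O0 p) : s.φ ((ℓ : H3 p) * y) = 0 := by
  rw [s.map_mul _ (nat_mem_O0 ℓ) _ hy, s.map_ell, zero_mul]

/-- The left ideal of all `x ∈ O0 p` whose reduction annihilates the vector `v`. -/
def lineIdeal (v : Fin 2 → ZMod ℓ) : AddSubgroup (H3 p) where
  carrier := {x | x ∈ O0 p ∧ (s.φ x).mulVec v = 0}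
  zero_mem' := ⟨by exact_mod_cast int_mem_O0 (p := p) 0, by rw [s.map_zero]; simp⟩
  add_mem' := by
    rintro x y ⟨hx, hxv⟩ ⟨hy, hyv⟩
    exact ⟨add_mem_O0 hx hy, by rw [s.map_add x hx y hy, Matrix.add_mulVec, hxv, hyv, add_zero]⟩
  neg_mem' := by
    rintro x ⟨hx, hxv⟩
    exact ⟨neg_mem_O0 hx, by rw [s.map_neg hx, Matrix.neg_mulVec, hxv, neg_zero]⟩

lemma mem_lineIdeal {v : Fin 2 → ZMod ℓ} {x : H3 p} :
    x ∈ s.lineIdeal v ↔ x ∈ O0 p ∧ (s.φ x).mulVec v = 0 := Iff.rfl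

lemma ell_mul_mem (v : Fin 2 → ZMod ℓ) (hp3 : p % 3 = 2) {y : H3 p} (hy : y ∈ O0 p) :
    (ℓ : H3 p) * y ∈ s.lineIdeal v :=
  ⟨mul_mem_O0 hp3 (nat_mem_O0 ℓ) hy, by rw [s.map_ell_mul hy]; simp⟩

/-- The gcd of the norms on `s.lineIdeal v` is not `ℓ²`: if `α` in it has trace prime to `ℓ`,
then `Nrd (α + ℓ) - Nrd α ≡ ℓ * Trd α (mod ℓ²)`. -/
theorem lineIdeal_mem_S3 (hp3 : p % 3 = 2) {v : Fin 2 → ZMod ℓ} (hv : v ≠ 0) :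
    s.lineIdeal v ∈ S3 p ℓ := by
  have hℓp : ℓ.Prime := Fact.out
  refine ⟨⟨fun x hx => hx.1, ?_⟩, ?_, ?_⟩
  · rintro x hx y ⟨hy, hyv⟩
    exact ⟨mul_mem_O0 hp3 hx hy, by
      rw [s.map_mul x hx y hy, ← Matrix.mulVec_mulVec, hyv, Matrix.mulVec_zero]⟩
  · rintro α ⟨hα, hαv⟩
    obtain ⟨n, hn, hdet⟩ := s.det α hα
    have h0 : (s.φ α).det = 0 := Matrix.exists_mulVec_eq_zero_iff.1 ⟨v, hv, hαv⟩
    rw [h0, eq_comm, ZMod.intCast_zmod_eq_zero_iff_dvd] at hdet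
    obtain ⟨k, rfl⟩ := hdet
    exact ⟨k, by rw [hn]; push_cast; ring⟩
  · intro d hd
    obtain ⟨c, hc⟩ : ∃ c : Fin 2 → ZMod ℓ, c 0 * v 1 - c 1 * v 0 ≠ 0 := by
      by_cases h0 : v 0 = 0
      · refine ⟨![1, 0], ?_⟩
        simp only [Matrix.cons_val_zero, Matrix.cons_val_one, one_mul, zero_mul, sub_zero]
        intro h1
        exact hv (by ext i; fin_cases i <;> simp [h0, h1])
      · exact ⟨![0, 1], by simpa using h0⟩
    obtain ⟨α, hα, hαM⟩ := s.surj !![c 0 * v 1, -(c 0 * v 0); c 1 * v 1, -(c 1 * v 0)]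
    have hαI : α ∈ s.lineIdeal v := by
      refine ⟨hα, ?_⟩
      rw [hαM]
      ext i; fin_cases i <;> simp [mulVec_two] <;> ring
    have hℓI : (ℓ : H3 p) ∈ s.lineIdeal v := by
      simpa using s.ell_mul_mem v hp3 (one_mem_O0 (p := p))
    obtain ⟨z1, h1⟩ := hd _ hαI
    obtain ⟨z2, h2⟩ := hd _ hℓI
    obtain ⟨z3, h3⟩ := hd _ (add_mem hαI hℓI)
    obtain ⟨n, hn, htr⟩ := s.trace α hα
    have e2 : Nrd (ℓ : H3 p) = (ℓ : ℚ) ^ 2 := by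
      have := Nrd_intCast (p := p) (ℓ : ℤ)
      simpa using this
    have e3 : Nrd (α + (ℓ : H3 p)) = Nrd α + ℓ * n + (ℓ : ℚ) ^ 2 := by
      rw [← hn, Nrd_eq, Nrd_eq]; simp; ring
    have hd2 : d ∣ (ℓ : ℤ) ^ 2 := ⟨z2, by
      rw [e2] at h2; exact_mod_cast h2⟩
    have hdn : d ∣ (ℓ : ℤ) * n := ⟨z3 - z1 - z2, by
      rw [e3, h1, ← e2, h2] at h3
      have : (ℓ : ℚ) * n = d * (z3 - z1 - z2) := by linarith
      exact_mod_cast this⟩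
    -- as `ℓ ∤ n`, both divisibilities combine to `d ∣ ℓ`
    have hnℓ : IsCoprime (ℓ : ℤ) n := by
      rw [(Nat.prime_iff_prime_int.1 hℓp).coprime_iff_not_dvd]
      intro hdvd
      rw [← ZMod.intCast_zmod_eq_zero_iff_dvd] at hdvd
      rw [hdvd, hαM, Matrix.trace_fin_two_of] at htr
      exact hc (by linear_combination htr)
    obtain ⟨x, y, hxy⟩ := hnℓ
    have : (ℓ : ℤ) = x * (ℓ : ℤ) ^ 2 + y * ((ℓ : ℤ) * n) := by linear_combination -(ℓ : ℤ) * hxy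
    rw [this]
    exact dvd_add (Dvd.dvd.mul_left hd2 x) (Dvd.dvd.mul_left hdn y)

lemma exists_map_ne_zero (hp3 : p % 3 = 2) {I : AddSubgroup (H3 p)} (hI : I ∈ S3 p ℓ) :
    ∃ α ∈ I, s.φ α ≠ 0 := by
  by_contra! h
  have hℓp : ℓ.Prime := Fact.out
  have hd : (ℓ : ℤ) ^ 2 ∣ ℓ := hI.2.2 _ (fun α hα => by
    obtain ⟨y, hy, rfl⟩ := s.ker α (hI.1.1 hα) (h α hα)
    obtain ⟨n, hn⟩ := Nrd_int hp3 hy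
    refine ⟨n, ?_⟩
    have := Nrd_intCast (p := p) (ℓ : ℤ)
    rw [Int.cast_natCast] at this
    rw [Nrd_mul, this, hn]
    push_cast; ring)
  have hd' : ℓ ^ 2 ∣ ℓ := by exact_mod_cast hd
  have := Nat.le_of_dvd hℓp.pos hd'
  nlinarith [hℓp.two_le]

/-- A left ideal containing `ℓ` contains the whole `s.lineIdeal v` as soon as it contains one of its
elements that is nonzero modulo `ℓ`. -/
lemma lineIdeal_le (hp3 : p % 3 = 2) {v : Fin 2 → ZMod ℓ} (hv : v ≠ 0) {I : AddSubgroup (H3 p)}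
    (hI : ∀ x ∈ O0 p, ∀ y ∈ I, x * y ∈ I) (hℓI : (ℓ : H3 p) ∈ I) {α : H3 p} (hα : α ∈ I)
    (hα0 : s.φ α ≠ 0) (hαv : α ∈ s.lineIdeal v) : s.lineIdeal v ≤ I := by
  rintro x ⟨hx, hxv⟩
  obtain ⟨Y, hY⟩ := exists_left_factor hv hα0 hαv.2 hxv
  obtain ⟨y, hy, rfl⟩ := s.surj Y
  have hyα := mul_mem_O0 hp3 hy hαv.1
  obtain ⟨z, hz, hxz⟩ := s.ker (x - y * α) (by
    rw [sub_eq_add_neg]; exact add_mem_O0 hx (neg_mem_O0 hyα)) (by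
    rw [s.map_sub hx hyα, s.map_mul y hy α hαv.1, ← hY, sub_self])
  have h1 : (ℓ : H3 p) * z ∈ I := by
    rw [Nat.cast_comm]; exact hI z hz _ hℓI
  have h2 := add_mem h1 (hI y hy α hα)
  rwa [← hxz, sub_add_cancel] at h2

theorem exists_line (hp3 : p % 3 = 2) {I : AddSubgroup (H3 p)} (hI : I ∈ S3 p ℓ) :
    ∃ v, v ≠ 0 ∧ I = s.lineIdeal v := by
  obtain ⟨α, hα, hα0⟩ := s.exists_map_ne_zero hp3 hI
  have hdet : ∀ β ∈ I, (s.φ β).det = 0 := by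
    intro β hβ
    obtain ⟨n, hn, hd⟩ := s.det β (hI.1.1 hβ)
    obtain ⟨k, hk⟩ := hI.2.1 β hβ
    rw [hd, ZMod.intCast_zmod_eq_zero_iff_dvd]
    exact ⟨k, by rw [hn] at hk; exact_mod_cast hk⟩
  obtain ⟨v, hv, hαv⟩ := Matrix.exists_mulVec_eq_zero_iff.2 (hdet α hα)
  refine ⟨v, hv, le_antisymm ?_ ?_⟩
  · intro β hβ
    refine ⟨hI.1.1 hβ, ?_⟩
    by_contra hne
    obtain ⟨X, Y, hXY⟩ := exists_det_ne_zero hα0 hαv hne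
    obtain ⟨x, hx, rfl⟩ := s.surj X
    obtain ⟨y, hy, rfl⟩ := s.surj Y
    apply hXY
    have hα' := hI.1.1 hα
    have hβ' := hI.1.1 hβ
    rw [← s.map_mul x hx α hα', ← s.map_mul y hy β hβ', ← s.map_add _ (mul_mem_O0 hp3 hx hα') _
      (mul_mem_O0 hp3 hy hβ')]
    exact hdet _ (add_mem (hI.1.2 x hx α hα) (hI.1.2 y hy β hβ))
  · exact s.lineIdeal_le hp3 hv hI.1.2 (ell_mem_of_S3 hp3 hI) hα hα0 ⟨hI.1.1 hα, hαv⟩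

lemma lineIdeal_eq_iff {v w : Fin 2 → ZMod ℓ} (hv : v ≠ 0) (hw : w ≠ 0) :
    s.lineIdeal v = s.lineIdeal w ↔ v 0 * w 1 = v 1 * w 0 := by
  constructor
  · intro h
    obtain ⟨x, hx, hxM⟩ := s.surj !![v 1, -v 0; 0, 0]
    have h1 : x ∈ s.lineIdeal v := by
      refine ⟨hx, ?_⟩
      rw [hxM]; ext i; fin_cases i <;> simp [mulVec_two]; ring
    rw [h] at h1
    have h2 := congrFun h1.2 0
    rw [mulVec_two, hxM] at h2
    simp at h2
    linear_combination -h2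
  · intro h
    have aux : ∀ {v w : Fin 2 → ZMod ℓ}, v ≠ 0 → v 0 * w 1 = v 1 * w 0 →
        s.lineIdeal v ≤ s.lineIdeal w := by
      intro v w hv h
      obtain ⟨c, rfl⟩ := exists_smul_of_cross hv h
      rintro x ⟨hx, hxv⟩
      exact ⟨hx, by rw [Matrix.mulVec_smul, hxv, smul_zero]⟩
    exact le_antisymm (aux hv h) (aux hw (by linear_combination -h))

theorem S3_ncard (s : Splitting p ℓ) (hp3 : p % 3 = 2) : (S3 p ℓ).ncard = ℓ + 1 := by
  have hcard : Nat.card (Projectivization (ZMod ℓ) (Fin 2 → ZMod ℓ)) = ℓ + 1 := by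
    rw [Projectivization.card_of_finrank_two _ _ (by simp), Nat.card_zmod]
  rw [← hcard, ← Set.ncard_univ]
  symm
  refine Set.ncard_congr (fun P _ => s.lineIdeal P.rep)
    (fun P _ => s.lineIdeal_mem_S3 hp3 P.rep_nonzero) ?_ ?_
  · intro P Q _ _ h
    rw [s.lineIdeal_eq_iff P.rep_nonzero Q.rep_nonzero] at h
    obtain ⟨c, hc⟩ := exists_smul_of_cross P.rep_nonzero h
    rw [← P.mk_rep, ← Q.mk_rep, Projectivization.mk_eq_mk_iff' _ _ _ P.rep_nonzero Q.rep_nonzero]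
    have hc0 : c ≠ 0 := by
      rintro rfl
      exact Q.rep_nonzero (by rw [hc, zero_smul])
    exact ⟨c⁻¹, by rw [hc, smul_smul, inv_mul_cancel₀ hc0, one_smul]⟩
  · intro I hI
    obtain ⟨v, hv, rfl⟩ := s.exists_line hp3 hI
    refine ⟨Projectivization.mk _ v hv, Set.mem_univ _, ?_⟩
    obtain ⟨c, hc⟩ := Projectivization.exists_smul_eq_mk_rep (ZMod ℓ) v hv
    rw [s.lineIdeal_eq_iff (Projectivization.rep_nonzero _) hv, ← hc]
    simp [Units.smul_def]; ring

end Splitting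

/-! ### Ideal classes -/

/-- If `J = I μ` for two ideals of the same reduced norm `ℓ ≠ 0`, then `Nrd μ` is an integer. -/
lemma Nrd_int_of_class {p ℓ : ℕ} (hp3 : p % 3 = 2) (hℓ : ℓ ≠ 0) {I J : AddSubgroup (H3 p)}
    (hI : I ∈ S3 p ℓ) (hJ : J ∈ S3 p ℓ) {μ : H3 p}
    (h : (J : Set (H3 p)) = (· * μ) '' (I : Set (H3 p))) : ∃ n : ℤ, Nrd μ = n := by
  -- the integers `m` with `m * Nrd μ ∈ ℓℤ` contain all norms of `I`, hence `ℓ`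
  let G : AddSubgroup ℤ :=
    { carrier := {m | ∃ z : ℤ, (m : ℚ) * Nrd μ = ℓ * z}
      zero_mem' := ⟨0, by simp⟩
      add_mem' := by
        rintro a b ⟨x, hx⟩ ⟨y, hy⟩
        exact ⟨x + y, by push_cast; rw [add_mul, hx, hy]; ring⟩
      neg_mem' := by
        rintro a ⟨x, hx⟩
        exact ⟨-x, by push_cast; rw [neg_mul, hx]; ring⟩ }
  obtain ⟨z, hz⟩ : (ℓ : ℤ) ∈ G := hI.2.mem G (fun α hα => by
    obtain ⟨n, hn⟩ := Nrd_int hp3 (hI.1.1 hα)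
    refine ⟨n, ?_, hn⟩
    have hαμ : α * μ ∈ (J : Set (H3 p)) := by rw [h]; exact ⟨α, hα, rfl⟩
    obtain ⟨k, hk⟩ := hJ.2.1 _ hαμ
    refine ⟨k, ?_⟩
    rw [← hn, ← Nrd_mul, hk]; push_cast; ring)
  have hℓ' : (ℓ : ℚ) ≠ 0 := by exact_mod_cast hℓ
  refine ⟨z, mul_left_cancel₀ hℓ' ?_⟩
  push_cast at hz
  exact hz

/-- Equivalent ideals are related by mutually inverse multipliers. -/
lemma SameClass.symm' {p : ℕ} (hp : 0 < p) {I J : AddSubgroup (H3 p)} (h : SameClass I J) :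
    ∃ μ ν : H3 p, μ * ν = 1 ∧ ν * μ = 1 ∧ μ ≠ 0 ∧ ν ≠ 0 ∧
      (J : Set (H3 p)) = (· * μ) '' (I : Set (H3 p)) ∧
      (I : Set (H3 p)) = (· * ν) '' (J : Set (H3 p)) := by
  obtain ⟨μ, hμ, hJ⟩ := h
  obtain ⟨ν, hν, h1, h2⟩ := exists_inv hp hμ
  refine ⟨μ, ν, h1, h2, hμ, hν, hJ, ?_⟩
  rw [hJ, Set.image_image]
  simp [mul_assoc, h1]

lemma SameClass.symm {p : ℕ} (hp : 0 < p) {I J : AddSubgroup (H3 p)} (h : SameClass I J) :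
    SameClass J I := by
  obtain ⟨μ, ν, -, -, -, hν, -, hI⟩ := h.symm' hp
  exact ⟨ν, hν, hI⟩

lemma SameClass.refl {p : ℕ} (I : AddSubgroup (H3 p)) : SameClass I I :=
  ⟨1, one_ne_zero, by simp⟩

lemma SameClass.trans {p : ℕ} (hp : 0 < p) {I J K : AddSubgroup (H3 p)} (h : SameClass I J)
    (h' : SameClass J K) : SameClass I K := by
  obtain ⟨μ, ν, h1, h2, hμ, hν, hJ, -⟩ := h.symm' hp
  obtain ⟨μ', hμ', hK⟩ := h'
  refine ⟨μ * μ', fun h0 => hμ' ?_, ?_⟩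
  · rw [← one_mul μ', ← h2, mul_assoc, h0, mul_zero]
  · rw [hK, hJ, Set.image_image]
    simp [mul_assoc]

lemma Nrd_eq_one_of_class {p ℓ : ℕ} (hp3 : p % 3 = 2) (hℓ : ℓ ≠ 0) {I J : AddSubgroup (H3 p)}
    (hI : I ∈ S3 p ℓ) (hJ : J ∈ S3 p ℓ) {μ : H3 p} (hμ : μ ≠ 0)
    (h : (J : Set (H3 p)) = (· * μ) '' (I : Set (H3 p))) : Nrd μ = 1 := by
  obtain ⟨ν, hν, h1, h2⟩ := exists_inv (by omega : 0 < p) hμ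
  have h' : (I : Set (H3 p)) = (· * ν) '' (J : Set (H3 p)) := by
    rw [h, Set.image_image]
    simp [mul_assoc, h1]
  obtain ⟨n, hn⟩ := Nrd_int_of_class hp3 hℓ hI hJ h
  obtain ⟨m, hm⟩ := Nrd_int_of_class hp3 hℓ hJ hI h'
  have hmul := Nrd_mul μ ν
  rw [h1, hn, hm] at hmul
  have h11 : Nrd (1 : H3 p) = 1 := by simpa using Nrd_intCast (p := p) 1
  rw [h11] at hmul
  have hnm : n * m = 1 := by exact_mod_cast hmul.symm
  have hn0 : 0 ≤ n := by
    have := Nrd_nonneg μ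
    rw [hn] at this; exact_mod_cast this
  rcases Int.eq_one_or_neg_one_of_mul_eq_one hnm with rfl | rfl
  · simpa using hn
  · omega

/-- The bound `p > 3ℓ²` forces the multiplier between two equivalent ideals of norm `ℓ` to be
`ℓ⁻¹ (A + B ε)` with `A + B ε ∈ ℤ[ε]` of norm `ℓ²`. -/
lemma exists_multiplier {p ℓ : ℕ} (hp3 : p % 3 = 2) (hpl : 3 * ℓ ^ 2 < p) (hℓ : ℓ ≠ 0)
    {I J : AddSubgroup (H3 p)} (hI : I ∈ S3 p ℓ) (hJ : J ∈ S3 p ℓ) {μ : H3 p} (hμ : μ ≠ 0)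
    (h : (J : Set (H3 p)) = (· * μ) '' (I : Set (H3 p))) :
    ∃ A B : ℤ, (ℓ : H3 p) * μ = ordElt p A B 0 0 ∧ A ^ 2 + A * B + B ^ 2 = (ℓ : ℤ) ^ 2 := by
  have h1 := Nrd_eq_one_of_class hp3 hℓ hI hJ hμ h
  have hmem : (ℓ : H3 p) * μ ∈ (J : Set (H3 p)) := by
    rw [h]; exact ⟨_, ell_mem_of_S3 hp3 hI, rfl⟩
  have hN : Nrd ((ℓ : H3 p) * μ) = (ℓ : ℚ) ^ 2 := by
    have := Nrd_intCast (p := p) (ℓ : ℤ)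
    rw [Int.cast_natCast] at this
    rw [Nrd_mul, h1, this]; simp
  obtain ⟨A, B, hAB⟩ := small_norm (hJ.1.1 hmem) (by rw [hN]; exact_mod_cast hpl)
  refine ⟨A, B, hAB, ?_⟩
  obtain ⟨q, hq⟩ := exists_q hp3
  rw [hAB, Nrd_ordElt hq] at hN
  have hN' : (A^2 + A*B + B^2 + B*0 + q*0^2 + (3*q-1)*0*0 + (3*q-1)*0^2 : ℤ) = (ℓ : ℤ) ^ 2 := by
    exact_mod_cast hN
  linarith

namespace Splitting

variable {p ℓ : ℕ} [Fact ℓ.Prime] (s : Splitting p ℓ)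

lemma lineIdeal_neg (v : Fin 2 → ZMod ℓ) : s.lineIdeal (-v) = s.lineIdeal v := by
  ext x
  rw [mem_lineIdeal, mem_lineIdeal, Matrix.mulVec_neg, neg_eq_zero]

/-- Right multiplication by a unit `u` of `O0 p` moves the line of an ideal by `u⁻¹`. -/
lemma lineIdeal_mul_unit (hp3 : p % 3 = 2) {u u' : H3 p} (hu : u ∈ O0 p) (hu' : u' ∈ O0 p)
    (h : u * u' = 1) (h' : u' * u = 1) (v : Fin 2 → ZMod ℓ) :
    (s.lineIdeal ((s.φ u').mulVec v) : Set (H3 p)) = (· * u) '' (s.lineIdeal v : Set (H3 p)) := by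
  ext x
  constructor
  · rintro ⟨hx, hxv⟩
    refine ⟨x * u', ⟨mul_mem_O0 hp3 hx hu', ?_⟩, by simp [mul_assoc, h']⟩
    rw [s.map_mul x hx u' hu', ← Matrix.mulVec_mulVec, hxv]
  · rintro ⟨y, ⟨hy, hyv⟩, rfl⟩
    refine ⟨mul_mem_O0 hp3 hy hu, ?_⟩
    rw [Matrix.mulVec_mulVec, ← s.map_mul _ (mul_mem_O0 hp3 hy hu) u' hu', mul_assoc, h, mul_one,
      hyv]

end Splitting

/-- The image of a vector under the reduction `!![1/2, -3/2; 1/2, 1/2]` of `ε`. -/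
def rot {ℓ : ℕ} [Fact ℓ.Prime] (v : Fin 2 → ZMod ℓ) : Fin 2 → ZMod ℓ :=
  ![(v 0 - 3 * v 1) / 2, (v 0 + v 1) / 2]

/-- `v` spans a line stable under `ε`: the determinant of `v` and `rot v` is `(v₀² + 3v₁²)/2`. -/
def IsEig {ℓ : ℕ} [Fact ℓ.Prime] (v : Fin 2 → ZMod ℓ) : Prop := v 0 ^ 2 + 3 * v 1 ^ 2 = 0

lemma rot_ne_zero {ℓ : ℕ} [Fact ℓ.Prime] (hℓ : 3 < ℓ) {v : Fin 2 → ZMod ℓ} (hv : ¬ IsEig v) :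
    rot v ≠ 0 := by
  intro h
  have h2 := two_ne_zmod hℓ
  have e0 : (v 0 - 3 * v 1) / 2 = 0 := congrFun h 0
  have e1 : (v 0 + v 1) / 2 = 0 := congrFun h 1
  rw [div_eq_zero_iff, or_iff_left h2] at e0 e1
  exact hv (by unfold IsEig; linear_combination v 0 * e1 - v 1 * e0)

lemma isEig_rot {ℓ : ℕ} [Fact ℓ.Prime] (hℓ : 3 < ℓ) {v : Fin 2 → ZMod ℓ} :
    IsEig (rot v) ↔ IsEig v := by
  have h2 := two_ne_zmod hℓ
  have : (rot v 0) ^ 2 + 3 * (rot v 1) ^ 2 = v 0 ^ 2 + 3 * v 1 ^ 2 := by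
    simp [rot]; field_simp; ring
  rw [IsEig, this, IsEig]

lemma ne_zero_of_not_isEig {ℓ : ℕ} [Fact ℓ.Prime] {v : Fin 2 → ZMod ℓ} (hv : ¬ IsEig v) :
    v ≠ 0 := by
  rintro rfl
  exact hv (by simp [IsEig])

lemma dvd_of_half {ℓ : ℕ} [Fact ℓ.Prime] (hℓ : 3 < ℓ) {A B : ℤ}
    (h : ((A : ZMod ℓ) + B / 2) = 0) (h' : (B : ZMod ℓ) / 2 = 0) : (ℓ : ℤ) ∣ A ∧ (ℓ : ℤ) ∣ B := by
  have h2 := two_ne_zmod hℓ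
  rw [h', add_zero] at h
  rw [div_eq_zero_iff, or_iff_left h2] at h'
  exact ⟨(ZMod.intCast_zmod_eq_zero_iff_dvd _ _).1 h, (ZMod.intCast_zmod_eq_zero_iff_dvd _ _).1 h'⟩

lemma eisenstein_units {a b : ℤ} (h : a ^ 2 + a * b + b ^ 2 = 1) :
    (a = 1 ∧ b = 0) ∨ (a = -1 ∧ b = 0) ∨ (a = 0 ∧ b = 1) ∨ (a = 0 ∧ b = -1) ∨
      (a = 1 ∧ b = -1) ∨ (a = -1 ∧ b = 1) := by
  have ha : a ≤ 1 := by nlinarith [sq_nonneg (a + 2 * b), sq_nonneg a]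
  have ha' : -1 ≤ a := by nlinarith [sq_nonneg (a + 2 * b), sq_nonneg a]
  have hb : b ≤ 1 := by nlinarith [sq_nonneg (b + 2 * a), sq_nonneg b]
  have hb' : -1 ≤ b := by nlinarith [sq_nonneg (b + 2 * a), sq_nonneg b]
  interval_cases a <;> interval_cases b <;> simp_all

lemma ordElt_norm_one {p : ℕ} (hp3 : p % 3 = 2) {a b : ℤ} (h : a ^ 2 + a * b + b ^ 2 = 1) :
    ordElt p a b 0 0 * ordElt p (a + b) (-b) 0 0 = 1 ∧
      ordElt p (a + b) (-b) 0 0 * ordElt p a b 0 0 = 1 := by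
  obtain ⟨q, hq⟩ := exists_q hp3
  have h1 : (1 : H3 p) = ordElt p 1 0 0 0 := by simp [ordElt_int]
  rw [ordElt_mul hq, ordElt_mul hq, h1]
  constructor
  · congr 1 <;> first | ring1 | linear_combination h
  · congr 1 <;> first | ring1 | linear_combination h

namespace Splitting

variable {p ℓ : ℕ} [Fact ℓ.Prime] (s : Splitting p ℓ)

lemma map_zeps_mulVec (hℓ : 3 < ℓ) (A B : ℤ) (v : Fin 2 → ZMod ℓ) :
    (s.φ (ordElt p A B 0 0)).mulVec v = (A : ZMod ℓ) • v + (B : ZMod ℓ) • rot v := by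
  have h2 := two_ne_zmod hℓ
  rw [s.map_zeps]
  ext i; fin_cases i <;> simp [mulVec_two, rot] <;> field_simp <;> ring

/-- Away from the `ε`-stable lines, the ideals equivalent to `s.lineIdeal v` are exactly its three
translates by the units of `ℤ[ε]`. -/
theorem sameClass_iff (hℓ : 3 < ℓ) (hp3 : p % 3 = 2) (hpl : 3 * ℓ ^ 2 < p)
    {v : Fin 2 → ZMod ℓ} (hv : ¬ IsEig v) {J : AddSubgroup (H3 p)} (hJ : J ∈ S3 p ℓ) :
    SameClass (s.lineIdeal v) J ↔ J = s.lineIdeal v ∨ J = s.lineIdeal (rot v) ∨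
      J = s.lineIdeal (rot (rot v)) := by
  have h2 := two_ne_zmod hℓ
  have hv0 := ne_zero_of_not_isEig hv
  have hrr : rot (rot v) = rot v - v := by
    ext i; fin_cases i <;> simp [rot] <;> field_simp <;> ring
  -- translation by a unit `a + bε`
  have hunit : ∀ a b : ℤ, a ^ 2 + a * b + b ^ 2 = 1 →
      (s.lineIdeal (((a + b : ℤ) : ZMod ℓ) • v + ((-b : ℤ) : ZMod ℓ) • rot v) : Set (H3 p)) =
        (· * ordElt p a b 0 0) '' (s.lineIdeal v : Set (H3 p)) := by
    intro a b hab
    have := s.lineIdeal_mul_unit hp3 (ordElt_mem p a b 0 0) (ordElt_mem p (a + b) (-b) 0 0)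
      (ordElt_norm_one hp3 hab).1 (ordElt_norm_one hp3 hab).2 v
    rwa [s.map_zeps_mulVec hℓ] at this
  have hunit0 : ∀ a b : ℤ, a ^ 2 + a * b + b ^ 2 = 1 → ordElt p a b 0 0 ≠ 0 := by
    intro a b hab h0
    have := (ordElt_norm_one hp3 hab).1
    rw [h0, zero_mul] at this
    exact zero_ne_one this
  constructor
  · rintro ⟨μ, hμ, hμJ⟩
    obtain ⟨A, B, hAB, hN⟩ := exists_multiplier hp3 hpl (by omega)
      (s.lineIdeal_mem_S3 hp3 hv0) hJ hμ hμJ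
    by_cases hdvd : (ℓ : ℤ) ∣ A ∧ (ℓ : ℤ) ∣ B
    · obtain ⟨⟨a, rfl⟩, ⟨b, rfl⟩⟩ := hdvd
      have hℓ0 : (ℓ : ℤ) ≠ 0 := by omega
      have hab : a ^ 2 + a * b + b ^ 2 = 1 := by
        have : (ℓ : ℤ) ^ 2 * (a ^ 2 + a * b + b ^ 2) = (ℓ : ℤ) ^ 2 * 1 := by
          linear_combination hN
        exact mul_left_cancel₀ (pow_ne_zero 2 hℓ0) this
      have hμ' : μ = ordElt p a b 0 0 := by
        have e : (ℓ : H3 p) * μ = (ℓ : H3 p) * ordElt p a b 0 0 := by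
          rw [hAB]; ext <;> simp [ordElt] <;> ring
        have hℓQ : (ℓ : ℚ) ≠ 0 := by exact_mod_cast (by omega : ℓ ≠ 0)
        have e1 := congrArg QuaternionAlgebra.re e
        have e2 := congrArg QuaternionAlgebra.imI e
        have e3 := congrArg QuaternionAlgebra.imJ e
        have e4 := congrArg QuaternionAlgebra.imK e
        simp [hℓQ] at e1 e2 e3 e4
        ext <;> assumption
      rw [hμ', ← hunit a b hab] at hμJ
      have hJeq := SetLike.coe_injective hμJ
      rw [hJeq]
      rcases eisenstein_units hab with ⟨rfl, rfl⟩ | ⟨rfl, rfl⟩ | ⟨rfl, rfl⟩ | ⟨rfl, rfl⟩ |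
        ⟨rfl, rfl⟩ | ⟨rfl, rfl⟩
      · left; congr 1; simp
      · left; rw [← s.lineIdeal_neg v]; congr 1; simp
      · right; right; rw [← s.lineIdeal_neg (rot (rot v)), hrr]; congr 1; simp [sub_eq_add_neg]
      · right; right; rw [hrr]; congr 1; simp [sub_eq_add_neg, add_comm]
      · right; left; congr 1; simp
      · right; left; rw [← s.lineIdeal_neg (rot v)]; congr 1; simp
    · exfalso
      obtain ⟨x, hx, hxM⟩ := s.surj !![v 1, -v 0; 0, 0]
      have h1 : x ∈ s.lineIdeal v := by
        refine ⟨hx, ?_⟩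
        rw [hxM]; ext i; fin_cases i <;> simp [mulVec_two]; ring
      have hxμ : x * μ ∈ (J : Set (H3 p)) := by rw [hμJ]; exact ⟨x, h1, rfl⟩
      have hz : s.φ (x * ordElt p A B 0 0) = 0 := by
        rw [← hAB, ← mul_assoc, ← Nat.cast_comm, mul_assoc]
        exact s.map_ell_mul (hJ.1.1 hxμ)
      rw [s.map_mul x hx _ (ordElt_mem ..), hxM, s.map_zeps] at hz
      have e0 := congrFun (congrFun hz 0) 0
      have e1 := congrFun (congrFun hz 0) 1
      simp only [Matrix.mul_apply, Fin.sum_univ_two, Matrix.of_apply, Matrix.cons_val_zero,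
        Matrix.cons_val_one, Matrix.zero_apply, Matrix.cons_val', Matrix.cons_val_fin_one] at e0 e1
      apply hdvd
      apply dvd_of_half hℓ
      · refine (mul_eq_zero.1 ?_).resolve_right hv
        linear_combination 3 * v 1 * e0 - v 0 * e1
      · refine (mul_eq_zero.1 ?_).resolve_right hv
        linear_combination -v 0 * e0 - v 1 * e1
  · rintro (rfl | rfl | rfl)
    · exact SameClass.refl _
    · refine ⟨ordElt p 1 (-1) 0 0, hunit0 _ _ (by norm_num), ?_⟩
      rw [← hunit 1 (-1) (by norm_num)]
      simp
    · refine ⟨ordElt p 0 (-1) 0 0, hunit0 _ _ (by norm_num), ?_⟩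
      rw [← hunit 0 (-1) (by norm_num), hrr]
      simp [sub_eq_add_neg, add_comm]

theorem class_ncard (hℓ : 3 < ℓ) (hp3 : p % 3 = 2) (hpl : 3 * ℓ ^ 2 < p)
    {v : Fin 2 → ZMod ℓ} (hv : ¬ IsEig v) :
    {J ∈ S3 p ℓ | SameClass (s.lineIdeal v) J}.ncard = 3 := by
  have h2 := two_ne_zmod hℓ
  have hv0 := ne_zero_of_not_isEig hv
  have hv1 : rot v ≠ 0 := rot_ne_zero hℓ hv
  have hv2 : rot (rot v) ≠ 0 := rot_ne_zero hℓ (by rwa [isEig_rot hℓ])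
  rw [Set.ncard_eq_three]
  refine ⟨s.lineIdeal v, s.lineIdeal (rot v), s.lineIdeal (rot (rot v)), ?_, ?_, ?_, ?_⟩
  · rw [Ne, s.lineIdeal_eq_iff hv0 hv1]
    intro h
    simp [rot] at h
    field_simp at h
    exact hv (by unfold IsEig; linear_combination h)
  · rw [Ne, s.lineIdeal_eq_iff hv0 hv2]
    intro h
    simp [rot] at h
    field_simp at h
    exact hv (by
      unfold IsEig
      refine (mul_eq_zero.1 (?_ : (2 : ZMod ℓ) * _ = 0)).resolve_left h2
      linear_combination h)
  · rw [Ne, s.lineIdeal_eq_iff hv1 hv2]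
    intro h
    simp [rot] at h
    field_simp at h
    exact hv (by
      unfold IsEig
      refine (mul_eq_zero.1 (?_ : (2 * 2 : ZMod ℓ) * _ = 0)).resolve_left (mul_ne_zero h2 h2)
      linear_combination h)
  · ext J
    simp only [Set.mem_ofPred_eq, Set.mem_insert_iff, Set.mem_singleton_iff]
    constructor
    · rintro ⟨hJ, h⟩
      exact (s.sameClass_iff hℓ hp3 hpl hv hJ).1 h
    · intro h
      have hJ : J ∈ S3 p ℓ := by
        rcases h with rfl | rfl | rfl
        · exact s.lineIdeal_mem_S3 hp3 hv0
        · exact s.lineIdeal_mem_S3 hp3 hv1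
        · exact s.lineIdeal_mem_S3 hp3 hv2
      exact ⟨hJ, (s.sameClass_iff hℓ hp3 hpl hv hJ).2 h⟩

end Splitting

/-! ### Principal ideals -/

lemma Nrd_zeps {p : ℕ} (hp3 : p % 3 = 2) (A B : ℤ) :
    Nrd (ordElt p A B 0 0) = ((A ^ 2 + A * B + B ^ 2 : ℤ) : ℚ) := by
  obtain ⟨q, hq⟩ := exists_q hp3
  rw [Nrd_ordElt hq]
  congr 1
  ring

lemma Nrd_generator {p ℓ : ℕ} (hp3 : p % 3 = 2) {I : AddSubgroup (H3 p)} (hI : I ∈ S3 p ℓ)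
    {α : H3 p} (hα : α ∈ O0 p) (h : (I : Set (H3 p)) = (· * α) '' O0 p) : Nrd α = ℓ := by
  obtain ⟨n, hn⟩ := Nrd_int hp3 hα
  have hαI : α ∈ I := by
    have : α ∈ (I : Set (H3 p)) := by rw [h]; exact ⟨1, one_mem_O0, one_mul α⟩
    exact this
  have h1 : n ∣ (ℓ : ℤ) := hI.2.2 n (fun β hβ => by
    have : β ∈ (I : Set (H3 p)) := hβ
    rw [h] at this
    obtain ⟨x, hx, rfl⟩ := this
    obtain ⟨m, hm⟩ := Nrd_int hp3 hx
    exact ⟨m, by rw [Nrd_mul, hn, hm, mul_comm]⟩)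
  obtain ⟨k, hk⟩ := hI.2.1 α hαI
  have h2 : (ℓ : ℤ) ∣ n := ⟨k, by rw [hn] at hk; exact_mod_cast hk⟩
  have hn0 : 0 ≤ n := by
    have := Nrd_nonneg α
    rw [hn] at this; exact_mod_cast this
  rw [hn, Int.dvd_antisymm hn0 (by positivity) h1 h2]
  simp

/-- Thue's lemma: by pigeonhole on `[0, √ℓ]²`, the congruence `A + B t ≡ 0 (mod ℓ)` has a nonzero
solution with `|A|, |B| < √ℓ`. -/
lemma exists_small {ℓ : ℕ} [Fact ℓ.Prime] (t : ZMod ℓ) :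
    ∃ A B : ℤ, (A : ZMod ℓ) + B * t = 0 ∧ 0 < A ^ 2 + A * B + B ^ 2 ∧
      A ^ 2 + A * B + B ^ 2 < 3 * (ℓ : ℤ) := by
  have hℓ : ℓ.Prime := Fact.out
  set m := Nat.sqrt ℓ with hm
  have hcard : Fintype.card (ZMod ℓ) < Fintype.card (Fin (m + 1) × Fin (m + 1)) := by
    rw [ZMod.card, Fintype.card_prod, Fintype.card_fin]
    exact Nat.lt_succ_sqrt ℓ
  obtain ⟨⟨a, b⟩, ⟨c, d⟩, hne, heq⟩ := Fintype.exists_ne_map_eq_of_card_lt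
    (fun x : Fin (m + 1) × Fin (m + 1) => ((x.1 : ℕ) : ZMod ℓ) + ((x.2 : ℕ) : ZMod ℓ) * t) hcard
  have hmℓ : m * m < ℓ := by
    refine lt_of_le_of_ne (Nat.sqrt_le ℓ) fun h => ?_
    rw [← h] at hℓ
    have h1 : m ≠ 1 := by rintro h1; rw [h1] at hℓ; exact absurd hℓ (by norm_num)
    exact Nat.not_prime_mul h1 h1 hℓ
  refine ⟨(a : ℤ) - c, (b : ℤ) - d, ?_, ?_, ?_⟩
  · push_cast
    simp only at heq
    linear_combination heq
  · have h0 : ¬ (((a : ℕ) : ℤ) - (c : ℕ) = 0 ∧ ((b : ℕ) : ℤ) - (d : ℕ) = 0) := by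
      rintro ⟨h1, h2⟩
      apply hne
      ext <;> simp <;> omega
    generalize ((a : ℕ) : ℤ) - (c : ℕ) = A at h0
    generalize ((b : ℕ) : ℤ) - (d : ℕ) = B at h0
    by_contra! hle
    have hB : B = 0 := by
      have : B ^ 2 ≤ 0 := by nlinarith [sq_nonneg (2 * A + B)]
      exact pow_eq_zero_iff (two_ne_zero) |>.1 (le_antisymm this (sq_nonneg B))
    subst hB
    have hA : A = 0 := by
      have : A ^ 2 ≤ 0 := by nlinarith
      exact pow_eq_zero_iff (two_ne_zero) |>.1 (le_antisymm this (sq_nonneg A))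
    exact h0 ⟨hA, rfl⟩
  · have ha := a.2
    have hb := b.2
    have hc := c.2
    have hd := d.2
    have hA1 : ((a : ℕ) : ℤ) - (c : ℕ) ≤ m := by omega
    have hA2 : -(m : ℤ) ≤ ((a : ℕ) : ℤ) - (c : ℕ) := by omega
    have hB1 : ((b : ℕ) : ℤ) - (d : ℕ) ≤ m := by omega
    have hB2 : -(m : ℤ) ≤ ((b : ℕ) : ℤ) - (d : ℕ) := by omega
    generalize ((a : ℕ) : ℤ) - (c : ℕ) = A at *
    generalize ((b : ℕ) : ℤ) - (d : ℕ) = B at *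
    have hmℓ' : (m : ℤ) * m < ℓ := by exact_mod_cast hmℓ
    have hA : A ^ 2 ≤ m * m := by nlinarith
    have hB : B ^ 2 ≤ m * m := by nlinarith
    nlinarith [sq_nonneg (A - B)]

lemma norm_eq_of_dvd {ℓ : ℕ} (hℓ : ℓ.Prime) (hℓ3 : 3 < ℓ) {A B : ℤ}
    (hd : (ℓ : ℤ) ∣ A ^ 2 + A * B + B ^ 2) (h0 : 0 < A ^ 2 + A * B + B ^ 2)
    (h3 : A ^ 2 + A * B + B ^ 2 < 3 * (ℓ : ℤ)) : A ^ 2 + A * B + B ^ 2 = ℓ := by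
  obtain ⟨k, hk⟩ := hd
  have hℓ0 : (0 : ℤ) < ℓ := by omega
  have hk0 : 0 < k := by
    by_contra! h
    nlinarith
  have hk3 : k < 3 := by
    by_contra! h
    nlinarith
  obtain rfl | rfl : k = 1 ∨ k = 2 := by omega
  · linarith
  · exfalso
    -- the form takes even values only at `A, B` both even, where it is divisible by `4`
    have hodd : (ℓ : ℤ) % 2 = 1 := by
      have := hℓ.eq_two_or_odd
      omega
    obtain ⟨a, ha⟩ := Int.even_or_odd' A
    obtain ⟨b, hb⟩ := Int.even_or_odd' B
    rcases ha with rfl | rfl <;> rcases hb with rfl | rfl <;> ring_nf at hk <;> omega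

namespace Splitting

variable {p ℓ : ℕ} [Fact ℓ.Prime] (s : Splitting p ℓ)

/-- A generator of a principal ideal of norm `ℓ` is too short to lie outside `ℤ[ε]`, so the line
of the ideal is `ε`-stable. -/
theorem isEig_of_principal (hℓ : 3 < ℓ) (hp3 : p % 3 = 2) (hpl : 3 * ℓ ^ 2 < p)
    {v : Fin 2 → ZMod ℓ} (hv : v ≠ 0) (h : IsPrincipalIdeal (O0 p) (s.lineIdeal v)) : IsEig v := by
  have h2 := two_ne_zmod hℓ
  obtain ⟨α, hα, hI⟩ := h
  have hN := Nrd_generator hp3 (s.lineIdeal_mem_S3 hp3 hv) hα hI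
  have hαI : α ∈ s.lineIdeal v := by
    have : α ∈ (s.lineIdeal v : Set (H3 p)) := by rw [hI]; exact ⟨1, one_mem_O0, one_mul α⟩
    exact this
  obtain ⟨A, B, rfl⟩ := small_norm hα (by
    rw [hN]
    have : 3 * ℓ < p := by nlinarith
    exact_mod_cast this)
  rw [Nrd_zeps hp3] at hN
  have hN' : A ^ 2 + A * B + B ^ 2 = (ℓ : ℤ) := by exact_mod_cast hN
  have hk := hαI.2
  rw [s.map_zeps] at hk
  have e0 := congrFun hk 0
  have e1 := congrFun hk 1
  simp [mulVec_two] at e0 e1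
  by_contra hE
  obtain ⟨⟨a, rfl⟩, ⟨b, rfl⟩⟩ := dvd_of_half hℓ (A := A) (B := B)
    ((mul_eq_zero.1 (by linear_combination v 0 * e0 + 3 * v 1 * e1)).resolve_right hE)
    ((mul_eq_zero.1 (by linear_combination v 0 * e1 - v 1 * e0)).resolve_right hE)
  have hℓ0 : (ℓ : ℤ) ≠ 0 := by omega
  have : (ℓ : ℤ) * (a ^ 2 + a * b + b ^ 2) = 1 := by
    apply mul_left_cancel₀ hℓ0
    linear_combination hN'
  have := Int.eq_one_or_neg_one_of_mul_eq_one this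
  omega

/-- Conversely, Thue's lemma provides an element of `ℤ[ε]` of norm `ℓ` annihilating an `ε`-stable
line, and this element generates the ideal. -/
theorem principal_of_isEig (hℓ : 3 < ℓ) (hp3 : p % 3 = 2)
    {v : Fin 2 → ZMod ℓ} (hv : v ≠ 0) (hE : IsEig v) :
    IsPrincipalIdeal (O0 p) (s.lineIdeal v) := by
  have h2 := two_ne_zmod hℓ
  have hℓp : ℓ.Prime := Fact.out
  have hv1 : v 1 ≠ 0 := by
    intro h1
    have h0 : v 0 = 0 := by
      unfold IsEig at hE
      rw [h1] at hE
      simpa using hE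
    exact hv (by ext i; fin_cases i <;> simp [h0, h1])
  obtain ⟨A, B, hAB, h0, h3⟩ := exists_small ((v 0 + v 1) / (2 * v 1))
  have hrot : rot v = ((v 0 + v 1) / (2 * v 1)) • v := by
    unfold IsEig at hE
    ext i; fin_cases i
    · simp [rot]
      field_simp
      linear_combination -hE
    · simp [rot]
      field_simp
  have hmem : ordElt p A B 0 0 ∈ s.lineIdeal v := by
    refine ⟨ordElt_mem .., ?_⟩
    rw [s.map_zeps_mulVec hℓ, hrot, smul_smul, ← add_smul, hAB, zero_smul]
  have hN : A ^ 2 + A * B + B ^ 2 = (ℓ : ℤ) := by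
    refine norm_eq_of_dvd hℓp hℓ ?_ h0 h3
    obtain ⟨k, hk⟩ := (s.lineIdeal_mem_S3 hp3 hv).2.1 _ hmem
    rw [Nrd_zeps hp3] at hk
    exact ⟨k, by exact_mod_cast hk⟩
  have hφ : s.φ (ordElt p A B 0 0) ≠ 0 := by
    intro hz
    rw [s.map_zeps] at hz
    have e0 := congrFun (congrFun hz 0) 0
    have e1 := congrFun (congrFun hz 1) 0
    simp only [Matrix.of_apply, Matrix.cons_val_zero,
      Matrix.cons_val_one, Matrix.zero_apply, Matrix.cons_val', Matrix.cons_val_fin_one] at e0 e1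
    obtain ⟨⟨a, rfl⟩, ⟨b, rfl⟩⟩ := dvd_of_half hℓ e0 e1
    have hℓ0 : (ℓ : ℤ) ≠ 0 := by omega
    have : (ℓ : ℤ) * (a ^ 2 + a * b + b ^ 2) = 1 := by
      apply mul_left_cancel₀ hℓ0
      linear_combination hN
    have := Int.eq_one_or_neg_one_of_mul_eq_one this
    omega
  generalize hα : ordElt p A B 0 0 = α at hmem hφ
  have hNα : Nrd α = ℓ := by rw [← hα, Nrd_zeps hp3, hN]; simp
  let I : AddSubgroup (H3 p) :=
    { carrier := (· * α) '' O0 p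
      zero_mem' := ⟨0, by exact_mod_cast int_mem_O0 (p := p) 0, zero_mul α⟩
      add_mem' := by
        rintro _ _ ⟨x, hx, rfl⟩ ⟨y, hy, rfl⟩
        exact ⟨x + y, add_mem_O0 hx hy, add_mul x y α⟩
      neg_mem' := by
        rintro _ ⟨x, hx, rfl⟩
        exact ⟨-x, neg_mem_O0 hx, neg_mul x α⟩ }
  refine ⟨α, hmem.1, Set.Subset.antisymm ?_ ?_⟩
  · refine s.lineIdeal_le (I := I) hp3 hv ?_ ?_ (α := α) ⟨1, one_mem_O0, one_mul α⟩ hφ hmem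
    · rintro x hx _ ⟨y, hy, rfl⟩
      exact ⟨x * y, mul_mem_O0 hp3 hx hy, mul_assoc x y α⟩
    · refine ⟨star α, star_mem_O0 hmem.1, ?_⟩
      show star α * α = _
      rw [star_mul_self_Nrd, hNα, QuaternionAlgebra.coe_natCast]
  · rintro _ ⟨x, hx, rfl⟩
    exact (s.lineIdeal_mem_S3 hp3 hv).1.2 x hx α hmem

end Splitting

/-! ### Square roots of `-3` and the number of principal ideals -/

lemma not_isEig {ℓ : ℕ} [Fact ℓ.Prime] (hℓ : 3 < ℓ) (h : ℓ % 3 = 2) {v : Fin 2 → ZMod ℓ}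
    (hv : v ≠ 0) : ¬ IsEig v := by
  intro hE
  unfold IsEig at hE
  have h2 := two_ne_zmod hℓ
  have h3 := three_ne_zmod hℓ
  have hv1 : v 1 ≠ 0 := by
    intro h1
    have h0 : v 0 = 0 := by
      rw [h1] at hE
      simpa using hE
    exact hv (by ext i; fin_cases i <;> simp [h0, h1])
  -- `g = (v₀/v₁ - 1)/2` is a primitive cube root of unity
  obtain ⟨t, ht⟩ : ∃ t : ZMod ℓ, t ^ 2 = -3 := ⟨v 0 / v 1, by
    field_simp
    linear_combination hE⟩
  obtain ⟨g, hg⟩ : ∃ g : ZMod ℓ, 2 * g = t - 1 := ⟨(t - 1) / 2, by field_simp⟩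
  have hgg : g ^ 2 + g + 1 = 0 := by
    apply (mul_eq_zero.1 (_ : (2 * 2 : ZMod ℓ) * _ = 0)).resolve_left (mul_ne_zero h2 h2)
    linear_combination (2 * g + t + 1) * hg + ht
  have hg3 : g ^ 3 = 1 := by linear_combination (g - 1) * hgg
  have hg1 : g ≠ 1 := by
    rintro rfl
    exact h3 (by linear_combination hgg)
  have hord : orderOf g = 3 := orderOf_eq_prime hg3 hg1
  have hg0 : g ≠ 0 := by
    rintro rfl
    simp at hg3
  have hdvd : orderOf g ∣ ℓ - 1 := orderOf_dvd_of_pow_eq_one (ZMod.pow_card_sub_one_eq_one hg0)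
  rw [hord] at hdvd
  omega

lemma exists_sq_eq_neg_three {ℓ : ℕ} [Fact ℓ.Prime] (h : ℓ % 3 = 1) :
    ∃ t : ZMod ℓ, t ^ 2 = -3 := by
  have : Fact (Nat.Prime 3) := ⟨Nat.prime_three⟩
  obtain ⟨u, hu⟩ := exists_prime_orderOf_dvd_card (G := (ZMod ℓ)ˣ) 3 (by
    rw [ZMod.card_units]; omega)
  have hu3 : ((u : ZMod ℓ)) ^ 3 = 1 := by
    have := pow_orderOf_eq_one u
    rw [hu] at this
    simpa using congrArg Units.val this
  have hu1 : (u : ZMod ℓ) - 1 ≠ 0 := by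
    intro h1
    have : u = 1 := by
      ext; simpa using sub_eq_zero.1 h1
    rw [this, orderOf_one] at hu
    omega
  have : (u : ZMod ℓ) ^ 2 + u + 1 = 0 := by
    refine (mul_eq_zero.1 (?_ : ((u : ZMod ℓ) - 1) * _ = 0)).resolve_left hu1
    linear_combination hu3
  exact ⟨2 * u + 1, by linear_combination 4 * this⟩

theorem principal_ncard {p ℓ : ℕ} [Fact ℓ.Prime] (s : Splitting p ℓ) (hℓ : 3 < ℓ)
    (hp3 : p % 3 = 2) (hpl : 3 * ℓ ^ 2 < p) (h : ℓ % 3 = 1) :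
    {I ∈ S3 p ℓ | IsPrincipalIdeal (O0 p) I}.ncard = 2 := by
  have h2 := two_ne_zmod hℓ
  have h3 := three_ne_zmod hℓ
  obtain ⟨t, ht⟩ := exists_sq_eq_neg_three h
  have ht0 : t ≠ 0 := by
    rintro rfl
    exact h3 (by linear_combination ht)
  have hv : (![t, 1] : Fin 2 → ZMod ℓ) ≠ 0 := fun h => by simpa using congrFun h 1
  have hw : (![-t, 1] : Fin 2 → ZMod ℓ) ≠ 0 := fun h => by simpa using congrFun h 1
  have hvE : IsEig (![t, 1] : Fin 2 → ZMod ℓ) := by simp [IsEig, ht]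
  have hwE : IsEig (![-t, 1] : Fin 2 → ZMod ℓ) := by simp [IsEig, ht]
  rw [Set.ncard_eq_two]
  refine ⟨s.lineIdeal ![t, 1], s.lineIdeal ![-t, 1], ?_, ?_⟩
  · rw [Ne, s.lineIdeal_eq_iff hv hw]
    intro h
    simp at h
    exact mul_ne_zero h2 ht0 (by linear_combination h)
  · ext I
    simp only [Set.mem_ofPred_eq, Set.mem_insert_iff, Set.mem_singleton_iff]
    constructor
    · rintro ⟨hI, hpr⟩
      obtain ⟨u, hu, rfl⟩ := s.exists_line hp3 hI
      have hE := s.isEig_of_principal hℓ hp3 hpl hu hpr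
      unfold IsEig at hE
      rw [s.lineIdeal_eq_iff hu hv, s.lineIdeal_eq_iff hu hw]
      have : (u 0 - t * u 1) * (u 0 + t * u 1) = 0 := by linear_combination hE - u 1 ^ 2 * ht
      rcases mul_eq_zero.1 this with h | h
      · left; simp; linear_combination h
      · right; simp; linear_combination h
    · rintro (rfl | rfl)
      · exact ⟨s.lineIdeal_mem_S3 hp3 hv, s.principal_of_isEig hℓ hp3 hv hvE⟩
      · exact ⟨s.lineIdeal_mem_S3 hp3 hw, s.principal_of_isEig hℓ hp3 hw hwE⟩

theorem principal_class {p ℓ : ℕ} (hp3 : p % 3 = 2) (hℓ : ℓ ≠ 0) {I : AddSubgroup (H3 p)}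
    (hI : I ∈ S3 p ℓ) (h : IsPrincipalIdeal (O0 p) I) :
    {J ∈ S3 p ℓ | SameClass I J} = {J ∈ S3 p ℓ | IsPrincipalIdeal (O0 p) J} := by
  obtain ⟨α, hα, hIα⟩ := h
  have hne : ∀ {J : AddSubgroup (H3 p)} {β : H3 p}, J ∈ S3 p ℓ → β ∈ O0 p →
      (J : Set (H3 p)) = (· * β) '' O0 p → β ≠ 0 := by
    rintro J β hJ hβ hJβ rfl
    have := Nrd_generator hp3 hJ hβ hJβ
    simp [Nrd_eq] at this
    exact hℓ (by exact_mod_cast this.symm)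
  ext J
  simp only [Set.mem_ofPred_eq]
  refine and_congr_right fun hJ => ⟨?_, ?_⟩
  · rintro ⟨μ, hμ, hJμ⟩
    rw [hIα, Set.image_image] at hJμ
    refine ⟨α * μ, hJ.1.1 ?_, ?_⟩
    · rw [hJμ]
      exact ⟨1, one_mem_O0, by simp⟩
    · rw [hJμ]; simp [mul_assoc]
  · rintro ⟨β, hβ, hJβ⟩
    obtain ⟨ν, hν, h1, h2⟩ := exists_inv (by omega : 0 < p) (hne hI hα hIα)
    refine ⟨ν * β, fun h0 => hne hJ hβ hJβ ?_, ?_⟩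
    · rw [← one_mul β, ← h1, mul_assoc, h0, mul_zero]
    · rw [hIα, Set.image_image, hJβ]
      have : ∀ x : H3 p, x * α * (ν * β) = x * β := fun x => by
        rw [mul_assoc, ← mul_assoc α, h1, one_mul]
      simp [this]

/-! ### Counting classes -/

/-- A finite set `T` partitioned into blocks `c x` of three elements has `|T| / 3` blocks. -/
lemma ncard_blocks {X : Type*} (T : Set X) (hT : T.Finite) (c : X → Set X)
    (hmem : ∀ x ∈ T, x ∈ c x) (hsub : ∀ x ∈ T, c x ⊆ T)
    (heq : ∀ x ∈ T, ∀ y ∈ c x, c y = c x) (h3 : ∀ x ∈ T, (c x).ncard = 3) :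
    {C : Set X | ∃ x ∈ T, C = c x}.ncard = T.ncard / 3 := by
  classical
  have himg : {C : Set X | ∃ x ∈ T, C = c x} =
      ((hT.toFinset.image c : Finset (Set X)) : Set (Set X)) := by
    ext C
    simp [eq_comm]
  rw [himg, Set.ncard_coe_finset, Set.ncard_eq_toFinset_card T hT]
  have hfib : ∀ C ∈ hT.toFinset.image c, (hT.toFinset.filter (fun x => c x = C)).card = 3 := by
    intro C hC
    obtain ⟨x, hx, rfl⟩ := Finset.mem_image.1 hC
    rw [Set.Finite.mem_toFinset] at hx
    rw [← h3 x hx, ← Set.ncard_coe_finset]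
    congr 1
    ext y
    simp only [Finset.coe_filter, Set.Finite.mem_toFinset, Set.mem_ofPred_eq]
    exact ⟨fun ⟨hy, hyx⟩ => hyx ▸ hmem y hy, fun hy => ⟨hsub x hx hy, heq x hx y hy⟩⟩
  have := Finset.card_eq_sum_card_image c hT.toFinset
  rw [Finset.sum_congr rfl hfib, Finset.sum_const, smul_eq_mul] at this
  omega

lemma class_eq {p ℓ : ℕ} (hp : 0 < p) {I J : AddSubgroup (H3 p)}
    (h : SameClass I J) : {K ∈ S3 p ℓ | SameClass J K} = {K ∈ S3 p ℓ | SameClass I K} := by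
  ext K
  exact and_congr_right fun _ => ⟨h.trans hp, (h.symm hp).trans hp⟩

/-- for primes `ℓ > 3` and `p ≡ 2 (mod 3)` with `p > 3ℓ²`, there are
exactly `ℓ+1` left `O`-ideals of reduced norm `ℓ`. If `ℓ ≡ 2 (mod 3)`, none is
principal and they fall into `(ℓ+1)/3` classes of `3` each. If `ℓ ≡ 1 (mod 3)`,
exactly two are principal forming one class, and the remaining `ℓ−1` fall into
`(ℓ−1)/3` classes of `3` each. -/
theorem stmt17 (ℓ p : ℕ) (hℓ : ℓ.Prime) (hℓ3 : 3 < ℓ) (hp : p.Prime)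
    (hp3 : p % 3 = 2) (hpl : 3 * ℓ ^ 2 < p) :
    (S3 p ℓ).ncard = ℓ + 1 ∧
    (ℓ % 3 = 2 →
      (∀ I ∈ S3 p ℓ, ¬ IsPrincipalIdeal (O0 p) I) ∧
      {C : Set (AddSubgroup (H3 p)) | ∃ I ∈ S3 p ℓ,
          C = {J ∈ S3 p ℓ | SameClass I J}}.ncard = (ℓ + 1) / 3 ∧
      (∀ I ∈ S3 p ℓ, {J ∈ S3 p ℓ | SameClass I J}.ncard = 3)) ∧
    (ℓ % 3 = 1 →
      {I ∈ S3 p ℓ | IsPrincipalIdeal (O0 p) I}.ncard = 2 ∧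
      (∀ I ∈ S3 p ℓ, IsPrincipalIdeal (O0 p) I →
        {J ∈ S3 p ℓ | SameClass I J} = {J ∈ S3 p ℓ | IsPrincipalIdeal (O0 p) J}) ∧
      {C : Set (AddSubgroup (H3 p)) | ∃ I ∈ S3 p ℓ, ¬ IsPrincipalIdeal (O0 p) I ∧
          C = {J ∈ S3 p ℓ | SameClass I J}}.ncard = (ℓ - 1) / 3 ∧
      (∀ I ∈ S3 p ℓ, ¬ IsPrincipalIdeal (O0 p) I →
        {J ∈ S3 p ℓ | SameClass I J}.ncard = 3)) := by
  have : Fact ℓ.Prime := ⟨hℓ⟩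
  obtain ⟨s⟩ := exists_splitting hℓ3 hp hp3 hpl
  have hcard := s.S3_ncard hp3
  have hfin : (S3 p ℓ).Finite := Set.finite_of_ncard_ne_zero (by omega)
  refine ⟨hcard, fun h2 => ?_, fun h1 => ?_⟩
  · have hthree : ∀ I ∈ S3 p ℓ, {J ∈ S3 p ℓ | SameClass I J}.ncard = 3 := by
      intro I hI
      obtain ⟨v, hv, rfl⟩ := s.exists_line hp3 hI
      exact s.class_ncard hℓ3 hp3 hpl (not_isEig hℓ3 h2 hv)
    refine ⟨?_, ?_, hthree⟩
    · intro I hI hpr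
      obtain ⟨v, hv, rfl⟩ := s.exists_line hp3 hI
      exact not_isEig hℓ3 h2 hv (s.isEig_of_principal hℓ3 hp3 hpl hv hpr)
    · rw [← hcard]
      exact ncard_blocks (S3 p ℓ) hfin (fun I => {J ∈ S3 p ℓ | SameClass I J})
        (fun I hI => ⟨hI, SameClass.refl I⟩) (fun I _ J hJ => hJ.1)
        (fun I _ J hJ => class_eq hp.pos hJ.2) hthree
  · have hprin := principal_ncard s hℓ3 hp3 hpl h1
    have hthree : ∀ I ∈ S3 p ℓ, ¬ IsPrincipalIdeal (O0 p) I →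
        {J ∈ S3 p ℓ | SameClass I J}.ncard = 3 := by
      intro I hI hpr
      obtain ⟨v, hv, rfl⟩ := s.exists_line hp3 hI
      exact s.class_ncard hℓ3 hp3 hpl fun hE => hpr (s.principal_of_isEig hℓ3 hp3 hv hE)
    refine ⟨hprin, fun I hI hpr => principal_class hp3 hℓ.ne_zero hI hpr, ?_, hthree⟩
    have hT : {I ∈ S3 p ℓ | ¬ IsPrincipalIdeal (O0 p) I}.ncard = ℓ - 1 := by
      have hdiff : {I ∈ S3 p ℓ | ¬ IsPrincipalIdeal (O0 p) I} =
          S3 p ℓ \ {I ∈ S3 p ℓ | IsPrincipalIdeal (O0 p) I} := by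
        ext I
        simp only [Set.mem_ofPred_eq, Set.mem_sdiff]
        tauto
      rw [hdiff, Set.ncard_sdiff (fun I hI => hI.1) (hfin.subset fun I hI => hI.1), hcard, hprin]
      omega
    rw [← hT]
    rw [← ncard_blocks {I ∈ S3 p ℓ | ¬ IsPrincipalIdeal (O0 p) I}
      (hfin.subset fun I hI => hI.1) (fun I => {J ∈ S3 p ℓ | SameClass I J})
      (fun I hI => ⟨hI.1, SameClass.refl I⟩) ?_
      (fun I _ J hJ => class_eq hp.pos hJ.2) (fun I hI => hthree I hI.1 hI.2)]
    · congr 1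
      ext C
      simp only [Set.mem_ofPred_eq, and_assoc]
    · rintro I ⟨hI, hnp⟩ J ⟨hJ, hIJ⟩
      refine ⟨hJ, fun hpr => hnp ?_⟩
      -- an ideal equivalent to a principal one is principal
      have hmem : I ∈ {K ∈ S3 p ℓ | SameClass J K} := ⟨hI, hIJ.symm hp.pos⟩
      rw [principal_class hp3 hℓ.ne_zero hJ hpr] at hmem
      exact hmem.2
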